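/- (Theorem 1) Let x₀ be a Lebesgue point of μ. Assume: (1) K_n(x₀ + a/n, x₀ + a/n)/K_n(x₀, x₀) → 1 as n → ∞, uniformly for a ∈ [−A, A], for every A < ∞; (2) liminf_{n→∞} (1/(n+1)) K_n(x₀, x₀) > 0; (3) condition (3) holds at x₀. Set ρ_n = (1/n) w(x₀) K_n(x₀, x₀). Then weak bulk universality holds at x₀: uniformly for a, b in compact subsets of ℝ, K_n(x₀ + a/(n ρ_n), x₀ + b/(n ρ_n))/K_n(x₀, x₀) → sin(π(b−a))/(π(b−a)) as n → ∞ (the right side interpreted as 1 when a = b). -/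

import Mathlib

open MeasureTheory Filter Set

/-- The Christoffel–Darboux kernel `K_n(x, y) = Σ_{j=0}^n p_j(x) p_j(y)` (for real arguments,
the orthonormal polynomials being real). -/
noncomputable def CDKernel (p : ℕ → Polynomial ℝ) (n : ℕ) (x y : ℝ) : ℝ :=
  ∑ j ∈ Finset.range (n + 1), (p j).eval x * (p j).eval y

/-- The (topological) support of a measure on `ℝ`: points all of whose neighborhoods have
positive measure. -/
def measSupport (μ : Measure ℝ) : Set ℝ := {x : ℝ | ∀ U ∈ nhds x, μ U ≠ 0}

/-!
Rescale around `x₀` so that the kernel is `1` at the origin and the measure tends to Lebesgue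
measure. The rescaled kernels form a normal family, and by the Christoffel–Darboux formula each
limit has the form `(S(w) C(z) - S(z) C(w)) / (w - z)` with a Wronskian pair `S`, `C` of entire
functions solving a common equation `f'' = -V f`. As `S` is a limit of real-rooted polynomials,
`V = -S'' / S` has at most quadratic growth, and the absence of Gaussian growth makes it `o(y²)`
along the imaginary axis, so `V` is affine. The limit kernel is `1` on the diagonal, hence at most
`1` in modulus everywhere by Cauchy–Schwarz, which leaves only constant `V = κ² ≥ 0`, that is, the
kernel `sinc (κ (y - x))`. Finally the reproducing property, tested against Lebesgue measure,
forces `κ = π`.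
-/

open scoped Topology Polynomial

section Sinc

theorem mul_sinc (x : ℝ) : x * Real.sinc x = Real.sin x := by
  rcases eq_or_ne x 0 with rfl | hx
  · simp
  · rw [Real.sinc_of_ne_zero hx, mul_div_cancel₀ _ hx]

theorem integrable_sinc_sq : Integrable fun x : ℝ ↦ Real.sinc x ^ 2 := by
  refine (integrable_inv_one_add_sq.const_mul 2).mono'
    (Real.continuous_sinc.pow 2).aestronglyMeasurable (Eventually.of_forall fun x ↦ ?_)
  rw [Real.norm_of_nonneg (sq_nonneg _), ← div_eq_mul_inv, le_div_iff₀ (by positivity)]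
  calc Real.sinc x ^ 2 * (1 + x ^ 2) = Real.sinc x ^ 2 + (x * Real.sinc x) ^ 2 := by ring
    _ ≤ 1 + 1 := by
      rw [mul_sinc]
      exact add_le_add ((sq_le_one_iff_abs_le_one _).2 (Real.abs_sinc_le_one x))
        (Real.sin_sq_le_one x)
    _ = 2 := one_add_one_eq_two

theorem integral_one_sub_mul_cos {a : ℝ} (ha : a ≠ 0) :
    ∫ x in (0 : ℝ)..1, (1 - x) * Real.cos (a * x) = Real.sinc (a / 2) ^ 2 / 2 := by
  have hderiv : ∀ x ∈ uIcc (0 : ℝ) 1, HasDerivAt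
      (fun x ↦ (1 - x) * Real.sin (a * x) / a - Real.cos (a * x) / a ^ 2)
      ((1 - x) * Real.cos (a * x)) x := by
    intro x _
    have hmul : HasDerivAt (fun x ↦ a * x) a x := by simpa using (hasDerivAt_id x).const_mul a
    have h := ((((hasDerivAt_id' x).const_sub 1).fun_mul hmul.sin).div_const a).fun_sub
      (hmul.cos.div_const (a ^ 2))
    refine h.congr_deriv ?_
    field_simp
    ring
  have hcont : Continuous fun x ↦ (1 - x) * Real.cos (a * x) := by fun_prop
  rw [intervalIntegral.integral_eq_sub_of_hasDerivAt hderiv (hcont.intervalIntegrable 0 1),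
    Real.sinc_of_ne_zero (div_ne_zero ha two_ne_zero), div_pow, Real.sin_sq_eq_half_sub]
  simp only [sub_self, zero_mul, mul_one, zero_div, zero_sub, sub_zero, mul_zero, Real.sin_zero,
    Real.cos_zero]
  rw [mul_div_cancel₀ a two_ne_zero]
  field_simp
  ring

/-- The tent function `max (1 - |x|) 0`, whose Fourier transform is `sinc²`; complex-valued to fit
the Fourier transform. -/
noncomputable def tent (x : ℝ) : ℂ := (max (1 - |x|) 0 : ℝ)

theorem continuous_tent : Continuous tent := by
  unfold tent
  fun_prop

theorem tent_eq_zero {x : ℝ} (hx : x ∉ Ioc (-1 : ℝ) 1) : tent x = 0 := by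
  have h : 1 ≤ |x| := by
    rcases not_and_or.1 hx with h | h
    · exact le_abs.2 (Or.inr (by linarith))
    · exact le_abs.2 (Or.inl (by linarith))
  rw [tent, max_eq_right (by linarith), Complex.ofReal_zero]

theorem hasCompactSupport_tent : HasCompactSupport tent :=
  HasCompactSupport.intro isCompact_Icc fun _ hx ↦
    tent_eq_zero fun h ↦ hx (Ioc_subset_Icc_self h)

theorem fourier_tent {ξ : ℝ} (hξ : ξ ≠ 0) :
    FourierTransform.fourier tent ξ = (Real.sinc (Real.pi * ξ) ^ 2 : ℝ) := by
  set e : ℝ → ℂ := fun x ↦ Complex.exp ((-2 * Real.pi * inner ℝ x ξ : ℝ) * Complex.I) • tent x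
    with he
  have hcont : Continuous e := by
    have := continuous_tent
    fun_prop
  have hsupp : ∫ x, e x = ∫ x in (-1 : ℝ)..1, e x := by
    rw [intervalIntegral.integral_of_le (by norm_num),
      setIntegral_eq_integral_of_forall_compl_eq_zero fun x hx ↦ by
        simp only [he, tent_eq_zero hx, smul_zero]]
  have hfold : ∫ x in (-1 : ℝ)..1, e x = ∫ x in (0 : ℝ)..1, (e (-x) + e x) := by
    have hneg := intervalIntegral.integral_comp_neg (a := 0) (b := 1) e
    have hint (a b : ℝ) : IntervalIntegrable e volume a b := hcont.intervalIntegrable a b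
    have hcont' : Continuous fun x ↦ e (-x) := hcont.comp continuous_neg
    rw [intervalIntegral.integral_add (hcont'.intervalIntegrable 0 1) (hint 0 1), hneg, neg_zero,
      intervalIntegral.integral_add_adjacent_intervals (hint _ _) (hint _ _)]
  have hreal : ∀ x ∈ uIcc (0 : ℝ) 1,
      e (-x) + e x = (2 * ((1 - x) * Real.cos (2 * Real.pi * ξ * x)) : ℝ) := by
    intro x hx
    rw [uIcc_of_le zero_le_one] at hx
    have htent : max (1 - |x|) 0 = 1 - x := by
      rw [abs_of_nonneg hx.1, max_eq_left (by linarith [hx.2])]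
    simp only [he, tent, abs_neg, htent, smul_eq_mul]
    push_cast
    rw [Complex.cos, ← add_mul]
    simp only [RCLike.inner_apply, conj_trivial]
    push_cast
    ring_nf
  rw [Real.fourier_eq', hsupp, hfold, intervalIntegral.integral_congr hreal,
    intervalIntegral.integral_ofReal, intervalIntegral.integral_const_mul,
    integral_one_sub_mul_cos (by positivity)]
  congr 1
  ring_nf

theorem integral_sinc_sq : ∫ x : ℝ, Real.sinc x ^ 2 = Real.pi := by
  have hae : FourierTransform.fourier tent =ᵐ[volume]
      fun ξ ↦ ((Real.sinc (Real.pi * ξ) ^ 2 : ℝ) : ℂ) := by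
    filter_upwards [compl_mem_ae_iff.2 (measure_singleton 0)] with ξ hξ using fourier_tent hξ
  have hint : Integrable fun ξ ↦ ((Real.sinc (Real.pi * ξ) ^ 2 : ℝ) : ℂ) :=
    (integrable_sinc_sq.comp_mul_left' Real.pi_ne_zero).ofReal
  have hinv := (continuous_tent.integrable_of_hasCompactSupport
    hasCompactSupport_tent).fourierInv_fourier_eq (hint.congr hae.symm)
    (continuous_tent.continuousAt (x := 0))
  rw [Real.fourierInv_eq'] at hinv
  simp only [inner_zero_right, mul_zero, Complex.ofReal_zero, zero_mul, Complex.exp_zero,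
    one_smul] at hinv
  rw [integral_congr_ae hae, integral_complex_ofReal,
    Measure.integral_comp_mul_left (fun x ↦ Real.sinc x ^ 2)] at hinv
  have htent : tent 0 = 1 := by simp [tent]
  rw [htent, abs_of_pos (inv_pos.2 Real.pi_pos), smul_eq_mul, ← Complex.ofReal_one,
    Complex.ofReal_inj, inv_mul_eq_one₀ Real.pi_ne_zero] at hinv
  exact hinv.symm

theorem tendsto_intervalIntegral_sinc_sq :
    Tendsto (fun R : ℝ ↦ ∫ x in (-R)..R, Real.sinc x ^ 2) atTop (𝓝 Real.pi) := by
  rw [← integral_sinc_sq]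
  exact intervalIntegral_tendsto_integral integrable_sinc_sq tendsto_neg_atTop_atBot tendsto_id

end Sinc

section RealRooted

variable {ι : Type*} [Fintype ι] (u : ι → ℝ)

/-- The polynomial `∏ i, (1 - uᵢ z)`: the general real-rooted polynomial with value `1` at `0`. The
roots are the inverses of the nonzero `uᵢ`. -/
noncomputable def realRootProd (z : ℂ) : ℂ := ∏ i, (1 - (u i : ℂ) * z)

/-- A bound for `|S'' / S|` and `|S' / S|² / 2` at a point of modulus `r`, where
`S z = z * ∏ i, (1 - uᵢ z)` with `|∑ i, uᵢ| ≤ b`, `∑ i, uᵢ² ≤ σ` and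
`∑ i, |uᵢ / (1 - uᵢ z)|² ≤ N`. -/
noncomputable def realRootedBound (b σ r N : ℝ) : ℝ :=
  1 / r ^ 2 + 4 * b ^ 2 + (4 * σ * r ^ 2 + 1) * N

theorem exists_eval_eq_realRootProd {q : ℂ[X]} (h0 : q.eval 0 = 1)
    (hroots : ∀ z, q.eval z = 0 → z.im = 0) :
    ∃ (ι : Type) (_ : Fintype ι) (u : ι → ℝ), ∀ z, q.eval z = realRootProd u z := by
  classical
  set u : q.roots → ℝ := fun r ↦ (r : ℂ).re⁻¹ with hu
  refine ⟨q.roots, inferInstance, u, fun z ↦ ?_⟩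
  have hprod (z : ℂ) : q.eval z = q.leadingCoeff * ∏ r : q.roots, (z - r) := by
    rw [(IsAlgClosed.splits q).eval_eq_prod_roots, ← Multiset.map_univ]
    rfl
  have hne (r : q.roots) : (r : ℂ) ≠ 0 := fun hr ↦ by
    rw [hprod, Finset.prod_eq_zero (Finset.mem_univ r) (by simp [hr]), mul_zero] at h0
    exact zero_ne_one h0
  have hre (r : q.roots) : ((r : ℂ).re : ℂ) = r :=
    Complex.ext rfl (hroots _ (Polynomial.isRoot_of_mem_roots (Multiset.coe_mem (x := r)))).symm
  calc q.eval z = (q.leadingCoeff * ∏ r : q.roots, (0 - (r : ℂ))) * realRootProd u z := by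
        rw [hprod, mul_assoc, realRootProd, ← Finset.prod_mul_distrib]
        congr 1
        refine Finset.prod_congr rfl fun r _ ↦ ?_
        have := hne r
        rw [hu, Complex.ofReal_inv, hre]
        field_simp
        ring
    _ = realRootProd u z := by rw [← hprod, h0, one_mul]

theorem differentiable_realRootProd : Differentiable ℂ (realRootProd u) := by
  unfold realRootProd
  fun_prop

@[simp]
theorem realRootProd_zero : realRootProd u 0 = 1 := by
  simp [realRootProd]

theorem hasDerivAt_one_sub_mul (a z : ℂ) : HasDerivAt (fun z ↦ 1 - a * z) (-a) z := by
  simpa using ((hasDerivAt_id z).const_mul a).const_sub 1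

theorem eventually_one_sub_mul_ne_zero {ι : Type*} [Finite ι] {u : ι → ℝ} {z : ℂ}
    (hz : ∀ i, 1 - (u i : ℂ) * z ≠ 0) : ∀ᶠ y in 𝓝 z, ∀ i, 1 - (u i : ℂ) * y ≠ 0 :=
  eventually_all.2 fun i ↦
    (hasDerivAt_one_sub_mul (u i : ℂ) z).continuousAt.eventually_ne (hz i)

variable {u} {z : ℂ}

theorem hasDerivAt_realRootProd (hz : ∀ i, 1 - (u i : ℂ) * z ≠ 0) :
    HasDerivAt (realRootProd u)
      (-(∑ i, (u i : ℂ) / (1 - (u i : ℂ) * z)) * realRootProd u z) z := by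
  classical
  refine (HasDerivAt.fun_finsetProd (u := Finset.univ)
    fun i _ ↦ hasDerivAt_one_sub_mul (u i : ℂ) z).congr_deriv ?_
  rw [← Finset.sum_neg_distrib, Finset.sum_mul]
  refine Finset.sum_congr rfl fun i _ ↦ ?_
  rw [realRootProd, ← Finset.mul_prod_erase Finset.univ _ (Finset.mem_univ i), smul_eq_mul]
  rw [← neg_div, div_mul_eq_mul_div, mul_left_comm, mul_div_cancel_left₀ _ (hz i), mul_comm]

theorem hasDerivAt_sum_div_one_sub (hz : ∀ i, 1 - (u i : ℂ) * z ≠ 0) :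
    HasDerivAt (fun z : ℂ ↦ ∑ i, (u i : ℂ) / (1 - (u i : ℂ) * z))
      (∑ i, ((u i : ℂ) / (1 - (u i : ℂ) * z)) ^ 2) z := by
  refine HasDerivAt.fun_sum fun i _ ↦ ?_
  refine ((hasDerivAt_const z (u i : ℂ)).fun_div (hasDerivAt_one_sub_mul _ z)
    (hz i)).congr_deriv ?_
  rw [div_pow]
  ring

theorem hasDerivAt_deriv_of_deriv_eq_mul {f g : ℂ → ℂ} {g' : ℂ} (hf : DifferentiableAt ℂ f z)
    (hfg : deriv f =ᶠ[𝓝 z] fun y ↦ g y * f y) (hg : HasDerivAt g g' z) :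
    HasDerivAt (deriv f) ((g z ^ 2 + g') * f z) z := by
  refine (hfg.hasDerivAt_iff).2 ((hg.fun_mul hf.hasDerivAt).congr_deriv ?_)
  rw [hfg.eq_of_nhds]
  ring

theorem deriv_realRootProd_zero : deriv (realRootProd u) 0 = -∑ i, (u i : ℂ) := by
  rw [(hasDerivAt_realRootProd (by simp)).deriv]
  simp

theorem sq_sub_deriv_deriv_realRootProd_zero :
    deriv (realRootProd u) 0 ^ 2 - deriv (deriv (realRootProd u)) 0 = ∑ i, (u i : ℂ) ^ 2 := by
  have hne : ∀ i, 1 - (u i : ℂ) * 0 ≠ 0 := by simp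
  have hderiv : deriv (realRootProd u) =ᶠ[𝓝 0]
      fun y ↦ -(∑ i, (u i : ℂ) / (1 - (u i : ℂ) * y)) * realRootProd u y :=
    (eventually_one_sub_mul_ne_zero hne).mono fun y hy ↦ (hasDerivAt_realRootProd hy).deriv
  rw [(hasDerivAt_deriv_of_deriv_eq_mul (differentiable_realRootProd u 0) hderiv
    (hasDerivAt_sum_div_one_sub hne).neg).deriv, deriv_realRootProd_zero]
  simp

theorem abs_sum_le_of_norm_realRootProd_le {M : ℝ}
    (hM : ∀ z ∈ Metric.sphere (0 : ℂ) 1, ‖realRootProd u z‖ ≤ M) : |∑ i, u i| ≤ M := by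
  have h := Complex.norm_deriv_le_of_forall_mem_sphere_norm_le one_pos
    (differentiable_realRootProd u).diffContOnCl hM
  rwa [deriv_realRootProd_zero, norm_neg, ← Complex.ofReal_sum, Complex.norm_real, div_one] at h

theorem sum_sq_le_of_norm_realRootProd_le {M : ℝ}
    (hM : ∀ z ∈ Metric.sphere (0 : ℂ) 1, ‖realRootProd u z‖ ≤ M) :
    ∑ i, u i ^ 2 ≤ M ^ 2 + 2 * M := by
  have hfst : ‖deriv (realRootProd u) 0‖ ≤ M := by
    simpa using Complex.norm_deriv_le_of_forall_mem_sphere_norm_le one_pos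
      (differentiable_realRootProd u).diffContOnCl hM
  have hsnd : ‖deriv (deriv (realRootProd u)) 0‖ ≤ 2 * M := by
    simpa [iteratedDeriv_succ] using Complex.norm_iteratedDeriv_le_of_forall_mem_sphere_norm_le 2
      one_pos (differentiable_realRootProd u).diffContOnCl hM
  calc ∑ i, u i ^ 2 = ‖∑ i, (u i : ℂ) ^ 2‖ := by
        rw [← Complex.norm_of_nonneg (Finset.sum_nonneg fun i _ ↦ sq_nonneg (u i))]
        push_cast
        rfl
    _ ≤ ‖deriv (realRootProd u) 0‖ ^ 2 + ‖deriv (deriv (realRootProd u)) 0‖ := by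
        rw [← sq_sub_deriv_deriv_realRootProd_zero, ← norm_pow]
        exact norm_sub_le _ _
    _ ≤ M ^ 2 + 2 * M := by gcongr

theorem abs_im_le_norm_mul_norm_one_sub (a : ℝ) (z : ℂ) :
    |z.im| ≤ ‖z‖ * ‖1 - (a : ℂ) * z‖ := by
  have him : (star z * (1 - (a : ℂ) * z)).im = -z.im := by
    simp only [Complex.star_def, Complex.mul_im, Complex.conj_re, Complex.conj_im, Complex.sub_re,
      Complex.sub_im, Complex.one_re, Complex.one_im, Complex.mul_re, Complex.ofReal_re,
      Complex.ofReal_im]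
    ring
  have h := Complex.abs_im_le_norm (star z * (1 - (a : ℂ) * z))
  rwa [him, abs_neg, norm_mul, norm_star] at h

theorem one_sub_mul_ne_zero_of_im_ne_zero (a : ℝ) (hz : z.im ≠ 0) : 1 - (a : ℂ) * z ≠ 0 := by
  intro h
  have := abs_im_le_norm_mul_norm_one_sub a z
  rw [h, norm_zero, mul_zero] at this
  exact hz (abs_nonpos_iff.1 this)

theorem sum_norm_div_one_sub_sq_le (hz : z.im ≠ 0) :
    ∑ i, ‖(u i : ℂ) / (1 - (u i : ℂ) * z)‖ ^ 2 ≤ (∑ i, u i ^ 2) * (‖z‖ ^ 2 / z.im ^ 2) := by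
  rw [Finset.sum_mul]
  refine Finset.sum_le_sum fun i _ ↦ ?_
  have hpos : 0 < ‖1 - (u i : ℂ) * z‖ := norm_pos_iff.2 (one_sub_mul_ne_zero_of_im_ne_zero _ hz)
  have him : z.im ^ 2 ≤ ‖z‖ ^ 2 * ‖1 - (u i : ℂ) * z‖ ^ 2 := by
    rw [← mul_pow, ← sq_abs]
    gcongr
    exact abs_im_le_norm_mul_norm_one_sub _ _
  rw [norm_div, div_pow, Complex.norm_real, Real.norm_eq_abs, sq_abs, ← mul_div_assoc,
    div_le_div_iff₀ (by positivity) (by positivity), mul_assoc]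
  gcongr

theorem norm_one_sub_mul_I_sq (a y : ℝ) :
    ‖1 - (a : ℂ) * (y * Complex.I)‖ ^ 2 = 1 + (a * y) ^ 2 := by
  rw [Complex.sq_norm, Complex.normSq_apply]
  simp
  ring

/-- On the imaginary axis `|1 - a i y|² = 1 + (a y)²`, and `t / (1 + t) ≤ log (1 + t)`. -/
theorem sum_norm_div_one_sub_sq_le_of_norm_sq_le_exp {y M : ℝ} (hy : y ≠ 0)
    (hM : ‖realRootProd u (y * Complex.I)‖ ^ 2 ≤ Real.exp M) :
    ∑ i, ‖(u i : ℂ) / (1 - (u i : ℂ) * (y * Complex.I))‖ ^ 2 ≤ M / y ^ 2 := by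
  rw [le_div_iff₀ (by positivity), Finset.sum_mul, ← Real.exp_le_exp]
  refine le_trans ?_ hM
  rw [Real.exp_sum, realRootProd, norm_prod, ← Finset.prod_pow]
  refine Finset.prod_le_prod (fun i _ ↦ (Real.exp_pos _).le) fun i _ ↦ ?_
  rw [norm_div, div_pow, norm_one_sub_mul_I_sq, Complex.norm_real, Real.norm_eq_abs, sq_abs]
  have hpos : 0 < 1 + (u i * y) ^ 2 := by positivity
  rw [← Real.le_log_iff_exp_le hpos]
  refine le_trans (le_of_eq ?_) (Real.one_sub_inv_le_log_of_pos hpos)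
  field_simp
  ring

theorem norm_sum_div_one_sub_sq_le {b σ N : ℝ} (hz : ∀ i, 1 - (u i : ℂ) * z ≠ 0)
    (hb : |∑ i, u i| ≤ b) (hσ : ∑ i, u i ^ 2 ≤ σ)
    (hN : ∑ i, ‖(u i : ℂ) / (1 - (u i : ℂ) * z)‖ ^ 2 ≤ N) :
    ‖∑ i, (u i : ℂ) / (1 - (u i : ℂ) * z)‖ ^ 2 ≤ 2 * b ^ 2 + 2 * (σ * ‖z‖ ^ 2 * N) := by
  have hsplit : ∑ i, (u i : ℂ) / (1 - (u i : ℂ) * z) =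
      (∑ i, u i : ℝ) + z * ∑ i, (u i : ℂ) * ((u i : ℂ) / (1 - (u i : ℂ) * z)) := by
    rw [Finset.mul_sum, Complex.ofReal_sum, ← Finset.sum_add_distrib]
    refine Finset.sum_congr rfl fun i _ ↦ ?_
    have := hz i
    field_simp
    ring
  have hcs : ‖∑ i, (u i : ℂ) * ((u i : ℂ) / (1 - (u i : ℂ) * z))‖ ^ 2 ≤ σ * N := by
    calc _ ≤ (∑ i, |u i| * ‖(u i : ℂ) / (1 - (u i : ℂ) * z)‖) ^ 2 := by
          gcongr
          refine (norm_sum_le _ _).trans_eq (Finset.sum_congr rfl fun i _ ↦ ?_)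
          rw [norm_mul, Complex.norm_real, Real.norm_eq_abs]
      _ ≤ (∑ i, |u i| ^ 2) * ∑ i, ‖(u i : ℂ) / (1 - (u i : ℂ) * z)‖ ^ 2 :=
          Finset.sum_mul_sq_le_sq_mul_sq _ _ _
      _ ≤ σ * N := by
          simp only [sq_abs]
          gcongr
          exact (Finset.sum_nonneg fun i _ ↦ sq_nonneg _).trans hσ
  calc _ ≤ (b + ‖z‖ * ‖∑ i, (u i : ℂ) * ((u i : ℂ) / (1 - (u i : ℂ) * z))‖) ^ 2 := by
        gcongr
        rw [hsplit]
        refine (norm_add_le _ _).trans ?_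
        rw [norm_mul, Complex.norm_real, Real.norm_eq_abs]
        gcongr
    _ ≤ 2 * (b ^ 2 + (‖z‖ * ‖∑ i, (u i : ℂ) * ((u i : ℂ) / (1 - (u i : ℂ) * z))‖) ^ 2) :=
        add_sq_le
    _ ≤ 2 * b ^ 2 + 2 * (σ * ‖z‖ ^ 2 * N) := by
        rw [mul_pow, mul_add, mul_comm σ, mul_assoc (‖z‖ ^ 2)]
        gcongr

theorem deriv_id_mul_realRootProd (hz0 : z ≠ 0) (hz : ∀ i, 1 - (u i : ℂ) * z ≠ 0) :
    deriv (fun z ↦ z * realRootProd u z) z =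
      (z⁻¹ - ∑ i, (u i : ℂ) / (1 - (u i : ℂ) * z)) * (z * realRootProd u z) := by
  rw [((hasDerivAt_id' z).fun_mul (hasDerivAt_realRootProd hz)).deriv]
  field_simp
  ring

theorem deriv_deriv_id_mul_realRootProd (hz0 : z ≠ 0) (hz : ∀ i, 1 - (u i : ℂ) * z ≠ 0) :
    deriv (deriv fun z ↦ z * realRootProd u z) z =
      ((∑ i, (u i : ℂ) / (1 - (u i : ℂ) * z)) ^ 2
        - 2 * (z⁻¹ * ∑ i, (u i : ℂ) / (1 - (u i : ℂ) * z))
        - ∑ i, ((u i : ℂ) / (1 - (u i : ℂ) * z)) ^ 2) * (z * realRootProd u z) := by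
  have hderiv : deriv (fun z ↦ z * realRootProd u z) =ᶠ[𝓝 z]
      fun y ↦ (y⁻¹ - ∑ i, (u i : ℂ) / (1 - (u i : ℂ) * y)) * (y * realRootProd u y) := by
    filter_upwards [eventually_one_sub_mul_ne_zero hz, eventually_ne_nhds hz0] with y hy hy0
    exact deriv_id_mul_realRootProd hy0 hy
  rw [(hasDerivAt_deriv_of_deriv_eq_mul
    (differentiableAt_id.fun_mul (differentiable_realRootProd u z)) hderiv
    ((hasDerivAt_inv hz0).fun_sub (hasDerivAt_sum_div_one_sub hz))).deriv]
  ring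

theorem norm_deriv_id_mul_realRootProd_sq_le {b σ N : ℝ} (him : z.im ≠ 0)
    (hb : |∑ i, u i| ≤ b) (hσ : ∑ i, u i ^ 2 ≤ σ)
    (hN : ∑ i, ‖(u i : ℂ) / (1 - (u i : ℂ) * z)‖ ^ 2 ≤ N) :
    ‖deriv (fun z ↦ z * realRootProd u z) z‖ ^ 2 ≤
      2 * realRootedBound b σ ‖z‖ N * ‖z * realRootProd u z‖ ^ 2 := by
  have hz0 : z ≠ 0 := fun h ↦ him (by simp [h])
  have hz i : 1 - (u i : ℂ) * z ≠ 0 := one_sub_mul_ne_zero_of_im_ne_zero _ him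
  have hN0 : 0 ≤ N := (Finset.sum_nonneg fun i _ ↦ sq_nonneg _).trans hN
  have hσ0 : 0 ≤ σ := (Finset.sum_nonneg fun i _ ↦ sq_nonneg (u i)).trans hσ
  rw [deriv_id_mul_realRootProd hz0 hz, norm_mul, mul_pow]
  gcongr
  calc _ ≤ (‖z‖⁻¹ + ‖∑ i, (u i : ℂ) / (1 - (u i : ℂ) * z)‖) ^ 2 := by
        gcongr
        rw [← norm_inv]
        exact norm_sub_le _ _
    _ ≤ 2 * (‖z‖⁻¹ ^ 2 + ‖∑ i, (u i : ℂ) / (1 - (u i : ℂ) * z)‖ ^ 2) := add_sq_le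
    _ ≤ 2 * realRootedBound b σ ‖z‖ N := by
        have := norm_sum_div_one_sub_sq_le hz hb hσ hN
        rw [realRootedBound, one_div, inv_pow]
        nlinarith [sq_nonneg b, mul_nonneg (mul_nonneg hσ0 (sq_nonneg ‖z‖)) hN0]

theorem norm_deriv_deriv_id_mul_realRootProd_le {b σ N : ℝ} (him : z.im ≠ 0)
    (hb : |∑ i, u i| ≤ b) (hσ : ∑ i, u i ^ 2 ≤ σ)
    (hN : ∑ i, ‖(u i : ℂ) / (1 - (u i : ℂ) * z)‖ ^ 2 ≤ N) :
    ‖deriv (deriv fun z ↦ z * realRootProd u z) z‖ ≤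
      realRootedBound b σ ‖z‖ N * ‖z * realRootProd u z‖ := by
  have hz0 : z ≠ 0 := fun h ↦ him (by simp [h])
  have hz i : 1 - (u i : ℂ) * z ≠ 0 := one_sub_mul_ne_zero_of_im_ne_zero _ him
  rw [deriv_deriv_id_mul_realRootProd hz0 hz, norm_mul]
  gcongr
  set L := ∑ i, (u i : ℂ) / (1 - (u i : ℂ) * z)
  calc _ ≤ ‖L‖ ^ 2 + 2 * ‖z‖⁻¹ * ‖L‖ + N := by
        refine (norm_sub_le _ _).trans (add_le_add ((norm_sub_le _ _).trans (le_of_eq ?_))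
          ((norm_sum_le _ _).trans ?_))
        · rw [norm_pow, norm_mul, norm_mul, norm_inv, Complex.norm_ofNat, mul_assoc]
        · simpa only [norm_pow] using hN
    _ ≤ ‖L‖ ^ 2 + (‖z‖⁻¹ ^ 2 + ‖L‖ ^ 2) + N := by
        gcongr
        exact two_mul_le_add_sq _ _
    _ ≤ realRootedBound b σ ‖z‖ N := by
        rw [realRootedBound, one_div, inv_pow]
        linarith [norm_sum_div_one_sub_sq_le hz hb hσ hN]

end RealRooted

theorem sq_mul_realRootedBound_le {b σ r y : ℝ} (hσ : 0 ≤ σ) (hy : y ≠ 0) (hyr : |y| ≤ r) :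
    y ^ 2 * realRootedBound b σ r (σ * (r ^ 2 / y ^ 2)) ≤
      (1 + 4 * b ^ 2 + 4 * σ ^ 2 + σ) * (1 + r) ^ 4 := by
  have hr : 0 < r := (abs_pos.2 hy).trans_le hyr
  have hyr2 : y ^ 2 ≤ r ^ 2 := sq_le_sq' (abs_le.1 hyr).1 (abs_le.1 hyr).2
  have hpow (k : ℕ) (hk : k ≤ 4) : r ^ k ≤ (1 + r) ^ 4 :=
    (pow_le_pow_left₀ hr.le (by linarith) k).trans (pow_le_pow_right₀ (by linarith) hk)
  calc y ^ 2 * realRootedBound b σ r (σ * (r ^ 2 / y ^ 2))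
      = y ^ 2 / r ^ 2 + 4 * b ^ 2 * y ^ 2 + 4 * σ ^ 2 * r ^ 4 + σ * r ^ 2 := by
        rw [realRootedBound]
        field_simp
        ring
    _ ≤ 1 * (1 + r) ^ 4 + 4 * b ^ 2 * (1 + r) ^ 4 + 4 * σ ^ 2 * (1 + r) ^ 4
          + σ * (1 + r) ^ 4 := by
        gcongr
        · exact ((div_le_one (by positivity)).2 hyr2).trans (by simpa using hpow 0 (by simp))
        · exact hyr2.trans (hpow 2 (by simp))
        · linarith
        · exact hpow 2 (by simp)
    _ = _ := by ring

theorem tendsto_realRootedBound_div_sq (b σ M δ : ℝ) :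
    Tendsto (fun y ↦ realRootedBound b σ y ((M + δ * y ^ 2) / y ^ 2) / y ^ 2) atTop
      (𝓝 (4 * σ * δ)) := by
  have hinv : Tendsto (fun y : ℝ ↦ (y ^ 2)⁻¹) atTop (𝓝 0) :=
    (tendsto_pow_atTop two_ne_zero).inv_tendsto_atTop
  have hlim := ((hinv.mul hinv).add (hinv.const_mul (4 * b ^ 2))).add
    ((hinv.const_add (4 * σ)).mul ((hinv.const_mul M).add_const δ))
  simp only [mul_zero, add_zero, zero_add] at hlim
  refine hlim.congr' ?_
  filter_upwards [eventually_ne_atTop 0] with y hy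
  rw [realRootedBound]
  field_simp

theorem exists_eventually_realRootedBound_le (b : ℝ) {σ ε : ℝ} (hσ : 0 ≤ σ) (hε : 0 < ε) :
    ∃ δ > 0, ∀ M : ℝ, ∀ᶠ y : ℝ in atTop,
      realRootedBound b σ y ((M + δ * y ^ 2) / y ^ 2) ≤ ε * y ^ 2 := by
  have hlt : 4 * σ * (ε / (4 * σ + 1)) < ε := by
    rw [← mul_div_assoc, div_lt_iff₀ (by positivity)]
    linarith
  refine ⟨ε / (4 * σ + 1), by positivity, fun M ↦ ?_⟩
  filter_upwards [(tendsto_realRootedBound_div_sq b σ M _).eventually_le_const hlt,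
    eventually_gt_atTop 0] with y hy hy0
  exact (div_le_iff₀ (by positivity)).1 hy

section Growth

theorem iteratedDeriv_zero_eq_zero_of_norm_le_mul_pow {f : ℂ → ℂ} (hf : Differentiable ℂ f)
    {K : ℝ} {m n : ℕ} (hmn : m < n) (hK : ∀ r : ℝ, 1 ≤ r → ∀ z, ‖z‖ ≤ r → ‖f z‖ ≤ K * r ^ m) :
    iteratedDeriv n f 0 = 0 := by
  have hlim : Tendsto (fun r : ℝ ↦ n.factorial * K * (r ^ m / r ^ n)) atTop (𝓝 0) := by
    simpa using (tendsto_pow_div_pow_atTop_zero hmn).const_mul (n.factorial * K)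
  refine norm_le_zero_iff.1 (ge_of_tendsto hlim ?_)
  filter_upwards [eventually_ge_atTop 1] with r hr
  refine (Complex.norm_iteratedDeriv_le_of_forall_mem_sphere_norm_le n (by positivity)
    hf.diffContOnCl fun z hz ↦ hK r hr z (mem_sphere_zero_iff_norm.1 hz).le).trans_eq ?_
  ring

theorem eq_sum_range_of_norm_le_mul_pow {f : ℂ → ℂ} (hf : Differentiable ℂ f) {K : ℝ} {m : ℕ}
    (hK : ∀ r : ℝ, 1 ≤ r → ∀ z, ‖z‖ ≤ r → ‖f z‖ ≤ K * r ^ m) (z : ℂ) :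
    f z = ∑ n ∈ Finset.range (m + 1), (n.factorial : ℂ)⁻¹ * iteratedDeriv n f 0 * z ^ n := by
  rw [← Complex.taylorSeries_eq_of_entire' 0 z hf, tsum_eq_sum fun n hn ↦ ?_, sub_zero]
  rw [iteratedDeriv_zero_eq_zero_of_norm_le_mul_pow hf (m := m) (by simpa using hn) hK]
  simp

theorem norm_sq_sub_norm_sq (w : ℂ) : ‖w ^ 2 - (‖w‖ : ℂ) ^ 2‖ = 2 * ‖w‖ * |w.im| := by
  have hfactor : w ^ 2 - (‖w‖ : ℂ) ^ 2 = w * ((2 * w.im : ℝ) * Complex.I) := by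
    rw [← Complex.mul_conj', ← Complex.sub_conj]
    ring
  rw [hfactor, norm_mul, norm_mul, Complex.norm_I, Complex.norm_real, norm_mul, Real.norm_eq_abs,
    Real.norm_eq_abs, abs_two]
  ring

variable {V : ℂ → ℂ} {K : ℝ}

/-- The factor `(z² - R²)²` absorbs the singularity of the bound at the two real points of the
circle `|z| = R`. -/
theorem norm_mul_sq_sub_sq_sq_le (hV : Differentiable ℂ V)
    (hK : ∀ z : ℂ, z.im ≠ 0 → z.im ^ 2 * ‖V z‖ ≤ K * (1 + ‖z‖) ^ 4) {R : ℝ} (hR : 1 ≤ R)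
    {z : ℂ} (hz : ‖z‖ ≤ R) : ‖V z‖ * ‖z ^ 2 - (R : ℂ) ^ 2‖ ^ 2 ≤ 64 * K * R ^ 6 := by
  have hK0 : 0 ≤ K := nonneg_of_mul_nonneg_left
    ((mul_nonneg (sq_nonneg _) (norm_nonneg _)).trans (hK Complex.I (by simp))) (by positivity)
  have hsphere : ∀ w ∈ Metric.sphere (0 : ℂ) R,
      ‖V w * (w ^ 2 - (R : ℂ) ^ 2) ^ 2‖ ≤ 64 * K * R ^ 6 := by
    intro w hw
    obtain rfl : ‖w‖ = R := mem_sphere_zero_iff_norm.1 hw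
    have hw4 : (1 + ‖w‖) ^ 4 ≤ (2 * ‖w‖) ^ 4 := by gcongr; linarith
    rw [norm_mul, norm_pow, norm_sq_sub_norm_sq, mul_pow, sq_abs]
    rcases eq_or_ne w.im 0 with him | him
    · rw [him]
      simp only [ne_eq, OfNat.ofNat_ne_zero, not_false_eq_true, zero_pow, mul_zero]
      positivity
    · calc ‖V w‖ * ((2 * ‖w‖) ^ 2 * w.im ^ 2) = (2 * ‖w‖) ^ 2 * (w.im ^ 2 * ‖V w‖) := by ring
        _ ≤ (2 * ‖w‖) ^ 2 * (K * (2 * ‖w‖) ^ 4) := by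
          refine mul_le_mul_of_nonneg_left ((hK w him).trans ?_) (sq_nonneg _)
          gcongr
        _ = 64 * K * ‖w‖ ^ 6 := by ring
  have hd : Differentiable ℂ fun w ↦ V w * (w ^ 2 - (R : ℂ) ^ 2) ^ 2 := by fun_prop
  have hR0 : R ≠ 0 := by positivity
  have hbound := Complex.norm_le_of_forall_mem_frontier_norm_le Metric.isBounded_ball
    hd.diffContOnCl (fun w hw ↦ hsphere w (by rwa [frontier_ball _ hR0] at hw))
    (z := z) (by rwa [closure_ball _ hR0, mem_closedBall_zero_iff])
  rwa [norm_mul, norm_pow] at hbound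

theorem norm_le_mul_sq_of_im_sq_mul_norm_le (hV : Differentiable ℂ V)
    (hK : ∀ z : ℂ, z.im ≠ 0 → z.im ^ 2 * ‖V z‖ ≤ K * (1 + ‖z‖) ^ 4) {r : ℝ} (hr : 1 ≤ r)
    {z : ℂ} (hz : ‖z‖ ≤ r) : ‖V z‖ ≤ 512 * K * r ^ 2 := by
  have hlow : 3 * r ^ 2 ≤ ‖z ^ 2 - ((2 * r : ℝ) : ℂ) ^ 2‖ := by
    have htri := norm_sub_norm_le (((2 * r : ℝ) : ℂ) ^ 2) (z ^ 2)
    rw [norm_sub_rev, norm_pow, norm_pow, Complex.norm_real, Real.norm_eq_abs, sq_abs] at htri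
    have : ‖z‖ ^ 2 ≤ r ^ 2 := by gcongr
    linarith
  have hup := norm_mul_sq_sub_sq_sq_le hV hK (by linarith : 1 ≤ 2 * r) (by linarith : ‖z‖ ≤ 2 * r)
  have hpos : 0 < (3 * r ^ 2) ^ 2 := by positivity
  have hle : ‖V z‖ * (3 * r ^ 2) ^ 2 ≤ (4096 / 9 * K * r ^ 2) * (3 * r ^ 2) ^ 2 :=
    calc _ ≤ ‖V z‖ * ‖z ^ 2 - ((2 * r : ℝ) : ℂ) ^ 2‖ ^ 2 := by gcongr
      _ ≤ _ := hup
      _ = _ := by ring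
  have hV0 := le_of_mul_le_mul_right hle hpos
  linarith [norm_nonneg (V z)]

theorem exists_affine_of_im_sq_mul_norm_le (hV : Differentiable ℂ V)
    (hK : ∀ z : ℂ, z.im ≠ 0 → z.im ^ 2 * ‖V z‖ ≤ K * (1 + ‖z‖) ^ 4)
    (hI : (fun y : ℝ ↦ V (y * Complex.I)) =o[atTop] fun y ↦ (y : ℂ) ^ 2) :
    ∃ a b : ℂ, ∀ z, V z = a + b * z := by
  obtain ⟨a, b, c, habc⟩ : ∃ a b c : ℂ, ∀ z, V z = a + b * z + c * z ^ 2 :=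
    ⟨_, _, _, fun z ↦ (eq_sum_range_of_norm_le_mul_pow hV
      (fun r hr z hz ↦ norm_le_mul_sq_of_im_sq_mul_norm_le hV hK hr hz) z).trans (by
        rw [Finset.sum_range_succ, Finset.sum_range_succ, Finset.sum_range_one, pow_zero, pow_one,
          mul_one])⟩
  have hinv : Tendsto (fun y : ℝ ↦ (y : ℂ)⁻¹) atTop (𝓝 0) := by
    simpa [Function.comp_def] using
      (Complex.continuous_ofReal.tendsto 0).comp tendsto_inv_atTop_zero
  have hlim : Tendsto (fun y : ℝ ↦ V (y * Complex.I) / (y : ℂ) ^ 2) atTop (𝓝 (-c)) := by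
    have h := ((hinv.pow 2).const_mul a).add ((hinv.const_mul (b * Complex.I)).sub_const c)
    simp only [ne_eq, OfNat.ofNat_ne_zero, not_false_eq_true, zero_pow, mul_zero, zero_add,
      zero_sub] at h
    refine h.congr' ?_
    filter_upwards [eventually_ne_atTop 0] with y hy
    have hy' : (y : ℂ) ≠ 0 := Complex.ofReal_ne_zero.2 hy
    rw [habc, mul_pow, Complex.I_sq]
    field_simp
    ring
  have hc : c = 0 := neg_eq_zero.1 (tendsto_nhds_unique hlim hI.tendsto_div_nhds_zero)
  exact ⟨a, b, fun z ↦ by rw [habc, hc, zero_mul, add_zero]⟩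

end Growth

section SecondOrderODE

theorem hasDerivAt_mul_sinc (κ h : ℝ) :
    HasDerivAt (fun h ↦ h * Real.sinc (κ * h)) (Real.cos (κ * h)) h := by
  rcases eq_or_ne κ 0 with rfl | hκ
  · simpa using hasDerivAt_id' h
  · have hsin : (fun h ↦ h * Real.sinc (κ * h)) = fun h ↦ Real.sin (κ * h) / κ := by
      ext h
      rw [← mul_sinc, mul_assoc, mul_div_cancel_left₀ _ hκ]
    rw [hsin]
    refine (((hasDerivAt_id' h).const_mul κ).sin.div_const κ).congr_deriv ?_
    field_simp

variable {φ φ' : ℝ → ℝ}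

/-- The energy `ψ'² + κ² ψ²` of the difference `ψ` of two solutions is conserved. -/
theorem eq_mul_sinc_of_hasDerivAt {κ : ℝ} (hφ : ∀ h, HasDerivAt φ (φ' h) h)
    (hφ' : ∀ h, HasDerivAt φ' (-(κ ^ 2 * φ h)) h) (h0 : φ 0 = 0) (h0' : φ' 0 = 1) (h : ℝ) :
    φ h = h * Real.sinc (κ * h) := by
  set ψ : ℝ → ℝ := fun h ↦ φ h - h * Real.sinc (κ * h) with hψdef
  set ψ' : ℝ → ℝ := fun h ↦ φ' h - Real.cos (κ * h) with hψ'def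
  have hψ (h : ℝ) : HasDerivAt ψ (ψ' h) h := (hφ h).fun_sub (hasDerivAt_mul_sinc κ h)
  have hψ' (h : ℝ) : HasDerivAt ψ' (-(κ ^ 2 * ψ h)) h := by
    refine ((hφ' h).fun_sub ((hasDerivAt_id' h).const_mul κ).cos).congr_deriv ?_
    rw [hψdef, ← mul_sinc (κ * h)]
    ring
  have henergy (h : ℝ) : HasDerivAt (fun h ↦ ψ' h ^ 2 + κ ^ 2 * ψ h ^ 2) 0 h :=
    (((hψ' h).fun_pow 2).fun_add (((hψ h).fun_pow 2).const_mul (κ ^ 2))).congr_deriv (by ring)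
  have hψ'0 (h : ℝ) : ψ' h = 0 := by
    have hconst := is_const_of_deriv_eq_zero (fun h ↦ (henergy h).differentiableAt)
      (fun h ↦ (henergy h).deriv) h 0
    have hzero : ψ' 0 ^ 2 + κ ^ 2 * ψ 0 ^ 2 = 0 := by simp [hψdef, hψ'def, h0, h0']
    rw [hzero] at hconst
    exact pow_eq_zero_iff two_ne_zero |>.1 (by nlinarith [sq_nonneg (ψ' h), sq_nonneg (κ * ψ h)])
  have hψ0 : ψ h = ψ 0 := is_const_of_deriv_eq_zero (fun h ↦ (hψ h).differentiableAt)
    (fun h ↦ (hψ h).deriv.trans (hψ'0 h)) h 0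
  simpa [hψdef, h0, sub_eq_zero] using hψ0

/-- If `v 0 < 0` then `φ` is strictly convex to the right of `0`, hence exceeds its tangent. -/
theorem nonneg_of_hasDerivAt_of_le_id {v : ℝ → ℝ} (hφ : ∀ h, HasDerivAt φ (φ' h) h)
    (hφ' : ∀ h, HasDerivAt φ' (-(v h * φ h)) h) (h0 : φ 0 = 0) (h0' : φ' 0 = 1)
    (hle : ∀ h, 0 ≤ h → φ h ≤ h) (hv : ContinuousAt v 0) : 0 ≤ v 0 := by
  by_contra! hneg
  have hslope : Tendsto (slope φ 0) (𝓝[>] 0) (𝓝 1) :=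
    (hasDerivWithinAt_iff_tendsto_slope' self_notMem_Ioi).1
      (h0' ▸ (hφ 0).hasDerivWithinAt (s := Ioi 0))
  obtain ⟨δ, hδ, hδsub⟩ : ∃ δ > 0, ∀ h ∈ Ioo 0 δ, v h < 0 ∧ 0 < φ h := by
    refine mem_nhdsGT_iff_exists_Ioo_subset.1 ?_
    filter_upwards [hslope.eventually_const_lt one_pos, self_mem_nhdsWithin,
      (hv.eventually_lt_const hneg).filter_mono nhdsWithin_le_nhds] with h hh hpos hvh
    rw [slope_def_field, h0, sub_zero, sub_zero] at hh
    exact ⟨hvh, (div_pos_iff_of_pos_right hpos).1 hh⟩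
  have hmem {h : ℝ} (hh : h ∈ interior (Icc 0 (δ / 2))) : h ∈ Ioo 0 δ :=
    Ioo_subset_Ioo_right (half_le_self hδ.le) (interior_Icc (α := ℝ) ▸ hh)
  have h0mem : (0 : ℝ) ∈ Icc 0 (δ / 2) := left_mem_Icc.2 (half_pos hδ).le
  have hmono' : StrictMonoOn φ' (Icc 0 (δ / 2)) := by
    refine strictMonoOn_of_deriv_pos (convex_Icc _ _)
      (fun h _ ↦ (hφ' h).continuousAt.continuousWithinAt) fun h hh ↦ ?_
    obtain ⟨hvh, hφh⟩ := hδsub h (hmem hh)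
    rw [(hφ' h).deriv]
    exact neg_pos.2 (mul_neg_of_neg_of_pos hvh hφh)
  have hmono : StrictMonoOn (fun h ↦ φ h - h) (Icc 0 (δ / 2)) := by
    have hd (h : ℝ) := (hφ h).fun_sub (hasDerivAt_id' h)
    refine strictMonoOn_of_deriv_pos (convex_Icc _ _)
      (fun h _ ↦ (hd h).continuousAt.continuousWithinAt) fun h hh ↦ ?_
    rw [(hd h).deriv, sub_pos, ← h0']
    exact hmono' h0mem (interior_subset hh) (hmem hh).1
  have hlt := hmono h0mem (right_mem_Icc.2 (half_pos hδ).le) (half_pos hδ)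
  simp only [h0, sub_zero] at hlt
  linarith [hle _ (half_pos hδ).le]

end SecondOrderODE

/-- A pair of entire functions, real on the real line, with Wronskian `S' C - S C' = 1`. The limits
of rescaled Christoffel–Darboux kernels have the form `(S y C x - S x C y) / (y - x)` for such a
pair. -/
structure IsWronskianPair (S C : ℂ → ℂ) : Prop where
  differentiable_left : Differentiable ℂ S
  differentiable_right : Differentiable ℂ C
  im_left : ∀ x : ℝ, (S x).im = 0
  im_right : ∀ x : ℝ, (C x).im = 0
  wronskian_ofReal : ∀ x : ℝ, deriv S x * C x - S x * deriv C x = 1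

/-- The potential `V` of the Schrödinger equation `f'' = -V f` solved by both members of a
Wronskian pair. -/
noncomputable def wronskianPotential (S C : ℂ → ℂ) (z : ℂ) : ℂ :=
  deriv (deriv S) z * deriv C z - deriv S z * deriv (deriv C) z

theorem eq_of_eqOn_ofReal {f g : ℂ → ℂ} (hf : Differentiable ℂ f) (hg : Differentiable ℂ g)
    (h : ∀ x : ℝ, f x = g x) : f = g := by
  have hreal : Tendsto (fun x : ℝ ↦ (x : ℂ)) (𝓝[≠] 0) (𝓝[≠] 0) :=
    tendsto_nhdsWithin_of_tendsto_nhds_of_eventually_within _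
      ((Complex.continuous_ofReal.tendsto' 0 0 rfl).mono_left nhdsWithin_le_nhds)
      (eventually_mem_nhdsWithin.mono fun x hx ↦ Complex.ofReal_ne_zero.2 hx)
  exact AnalyticOnNhd.eq_of_frequently_eq
    (hf.differentiableOn.analyticOnNhd isOpen_univ) (hg.differentiableOn.analyticOnNhd isOpen_univ)
    (hreal.frequently (Eventually.of_forall h).frequently)

namespace IsWronskianPair

variable {S C : ℂ → ℂ}

theorem wronskian (h : IsWronskianPair S C) (z : ℂ) :
    deriv S z * C z - S z * deriv C z = 1 := by
  have hS := h.differentiable_left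
  have hC := h.differentiable_right
  have hS' : Differentiable ℂ (deriv S) := hS.contDiff.differentiable_deriv_two
  have hC' : Differentiable ℂ (deriv C) := hC.contDiff.differentiable_deriv_two
  exact congrFun (eq_of_eqOn_ofReal (f := fun z ↦ deriv S z * C z - S z * deriv C z)
    ((hS'.mul hC).sub (hS.mul hC')) (differentiable_const 1) h.wronskian_ofReal) z

theorem deriv_deriv_mul_eq (h : IsWronskianPair S C) (z : ℂ) :
    deriv (deriv S) z * C z = S z * deriv (deriv C) z := by
  have hS := h.differentiable_left
  have hC := h.differentiable_right
  have hd := ((hS.contDiff.differentiable_deriv_two z).hasDerivAt.fun_mul (hC z).hasDerivAt).fun_sub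
    ((hS z).hasDerivAt.fun_mul (hC.contDiff.differentiable_deriv_two z).hasDerivAt)
  rw [funext h.wronskian] at hd
  linear_combination hd.unique (hasDerivAt_const z 1)

theorem deriv_deriv_left (h : IsWronskianPair S C) (z : ℂ) :
    deriv (deriv S) z = -(wronskianPotential S C z * S z) := by
  rw [wronskianPotential]
  linear_combination -(deriv (deriv S) z) * h.wronskian z + deriv S z * h.deriv_deriv_mul_eq z

theorem deriv_deriv_right (h : IsWronskianPair S C) (z : ℂ) :
    deriv (deriv C) z = -(wronskianPotential S C z * C z) := by
  rw [wronskianPotential]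
  linear_combination -(deriv (deriv C) z) * h.wronskian z + deriv C z * h.deriv_deriv_mul_eq z

theorem differentiable_wronskianPotential (h : IsWronskianPair S C) :
    Differentiable ℂ (wronskianPotential S C) := by
  have hS' : Differentiable ℂ (deriv S) := h.differentiable_left.contDiff.differentiable_deriv_two
  have hC' : Differentiable ℂ (deriv C) := h.differentiable_right.contDiff.differentiable_deriv_two
  have hS'' : Differentiable ℂ (deriv (deriv S)) := hS'.contDiff.differentiable_deriv_two
  have hC'' : Differentiable ℂ (deriv (deriv C)) := hC'.contDiff.differentiable_deriv_two
  exact (hS''.mul hC').sub (hS'.mul hC'')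

theorem left_ne_zero_of_norm_deriv_sq_le (h : IsWronskianPair S C) {z : ℂ} {B : ℝ}
    (hB : ‖deriv S z‖ ^ 2 ≤ B * ‖S z‖ ^ 2) : S z ≠ 0 := by
  intro hz
  have hW := h.wronskian z
  rw [hz, norm_zero, zero_pow two_ne_zero, mul_zero] at hB
  have hz' : deriv S z = 0 := norm_eq_zero.1 (pow_eq_zero_iff two_ne_zero |>.1
    (le_antisymm hB (sq_nonneg _)))
  simp [hz, hz'] at hW

theorem norm_wronskianPotential_le (h : IsWronskianPair S C) {z : ℂ} {B : ℝ} (hz : S z ≠ 0)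
    (hB : ‖deriv (deriv S) z‖ ≤ B * ‖S z‖) : ‖wronskianPotential S C z‖ ≤ B := by
  rw [h.deriv_deriv_left, norm_neg, norm_mul] at hB
  exact le_of_mul_le_mul_right hB (norm_pos_iff.2 hz)

/-- The fundamental solution based at `x`, as a function of the displacement `h`. -/
noncomputable def displacementKernel (S C : ℂ → ℂ) (x h : ℝ) : ℝ :=
  (S (x + h : ℝ) * C x - S x * C (x + h : ℝ)).re

/-- The derivative of `displacementKernel` in the displacement. -/
noncomputable def displacementKernelDeriv (S C : ℂ → ℂ) (x h : ℝ) : ℝ :=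
  (deriv S (x + h : ℝ) * C x - S x * deriv C (x + h : ℝ)).re

theorem ofReal_displacementKernel (h : IsWronskianPair S C) (x y : ℝ) :
    (displacementKernel S C x (y - x) : ℂ) = S y * C x - S x * C y := by
  rw [displacementKernel, add_sub_cancel]
  refine Complex.ext rfl ?_
  simp [h.im_left, h.im_right]

theorem hasDerivAt_displacementKernel (h : IsWronskianPair S C) (x t : ℝ) :
    HasDerivAt (displacementKernel S C x) (displacementKernelDeriv S C x t) t := by
  have hd := (((h.differentiable_left _).hasDerivAt.mul_const (C x)).fun_sub
    ((h.differentiable_right _).hasDerivAt.const_mul (S x))).real_of_complex (z := x + t)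
  exact hd.comp_const_add x t

theorem hasDerivAt_displacementKernelDeriv (h : IsWronskianPair S C) (x t : ℝ) :
    HasDerivAt (displacementKernelDeriv S C x)
      (-((wronskianPotential S C (x + t : ℝ)).re * displacementKernel S C x t)) t := by
  have hS' := h.differentiable_left.contDiff.differentiable_deriv_two
  have hC' := h.differentiable_right.contDiff.differentiable_deriv_two
  have hd := (((hS' _).hasDerivAt.mul_const (C x)).fun_sub
    ((hC' _).hasDerivAt.const_mul (S x))).real_of_complex (z := x + t)
  refine (hd.comp_const_add x t).congr_deriv ?_
  rw [h.deriv_deriv_left, h.deriv_deriv_right, displacementKernel]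
  simp only [Complex.sub_re, Complex.mul_re, Complex.neg_re, h.im_left, h.im_right]
  ring

theorem wronskianPotential_re_nonneg (h : IsWronskianPair S C)
    (hle : ∀ x y : ℝ, ‖S y * C x - S x * C y‖ ≤ |y - x|) (x : ℝ) :
    0 ≤ (wronskianPotential S C x).re := by
  have hV : Continuous fun t : ℝ ↦ (wronskianPotential S C (x + t : ℝ)).re :=
    Complex.continuous_re.comp (h.differentiable_wronskianPotential.continuous.comp (by fun_prop))
  have hφle (t : ℝ) (ht : 0 ≤ t) : displacementKernel S C x t ≤ t := by
    refine (Complex.re_le_norm _).trans ((hle x (x + t)).trans_eq ?_)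
    rw [add_sub_cancel_left, abs_of_nonneg ht]
  simpa using nonneg_of_hasDerivAt_of_le_id (h.hasDerivAt_displacementKernel x)
    (h.hasDerivAt_displacementKernelDeriv x) (by simp [displacementKernel])
    (by simp [displacementKernelDeriv, h.wronskian]) hφle hV.continuousAt

theorem exists_eq_mul_sinc_of_wronskianPotential_affine (h : IsWronskianPair S C) {a b : ℂ}
    (hle : ∀ x y : ℝ, ‖S y * C x - S x * C y‖ ≤ |y - x|)
    (hV : ∀ z, wronskianPotential S C z = a + b * z) :
    ∃ κ : ℝ, 0 ≤ κ ∧ ∀ x y : ℝ,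
      S y * C x - S x * C y = (((y - x) * Real.sinc (κ * (y - x)) : ℝ) : ℂ) := by
  have hre (x : ℝ) : (wronskianPotential S C x).re = a.re + b.re * x := by simp [hV]
  have hnonneg (x : ℝ) : 0 ≤ a.re + b.re * x := hre x ▸ h.wronskianPotential_re_nonneg hle x
  have hb : b.re = 0 := by
    by_contra hb
    have := hnonneg (-(a.re + 1) / b.re)
    rw [mul_div_cancel₀ _ hb] at this
    linarith
  have ha : 0 ≤ a.re := by simpa using hnonneg 0
  refine ⟨√a.re, Real.sqrt_nonneg _, fun x y ↦ ?_⟩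
  rw [← h.ofReal_displacementKernel, eq_mul_sinc_of_hasDerivAt (h.hasDerivAt_displacementKernel x)
    (κ := √a.re) (fun t ↦ ?_) (by simp [displacementKernel])
    (by simp [displacementKernelDeriv, h.wronskian])]
  convert h.hasDerivAt_displacementKernelDeriv x t using 3
  rw [hre, hb, zero_mul, add_zero, Real.sq_sqrt ha]

theorem exists_eq_mul_sinc (h : IsWronskianPair S C) {b σ : ℝ} (hσ : 0 ≤ σ)
    (hle : ∀ x y : ℝ, ‖S y * C x - S x * C y‖ ≤ |y - x|)
    (hderiv : ∀ z : ℂ, z.im ≠ 0 → ‖deriv S z‖ ^ 2 ≤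
      2 * realRootedBound b σ ‖z‖ (σ * (‖z‖ ^ 2 / z.im ^ 2)) * ‖S z‖ ^ 2)
    (hderiv2 : ∀ z : ℂ, z.im ≠ 0 → ‖deriv (deriv S) z‖ ≤
      realRootedBound b σ ‖z‖ (σ * (‖z‖ ^ 2 / z.im ^ 2)) * ‖S z‖)
    (haxis : ∀ δ : ℝ, 0 < δ → ∃ M : ℝ, ∀ y : ℝ, 0 < y → ‖deriv (deriv S) (y * Complex.I)‖ ≤
      realRootedBound b σ y ((M + δ * y ^ 2) / y ^ 2) * ‖S (y * Complex.I)‖) :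
    ∃ κ : ℝ, 0 ≤ κ ∧ ∀ x y : ℝ,
      S y * C x - S x * C y = (((y - x) * Real.sinc (κ * (y - x)) : ℝ) : ℂ) := by
  have hne (z : ℂ) (hz : z.im ≠ 0) : S z ≠ 0 := h.left_ne_zero_of_norm_deriv_sq_le (hderiv z hz)
  obtain ⟨a, b, hV⟩ := exists_affine_of_im_sq_mul_norm_le h.differentiable_wronskianPotential
    (fun z hz ↦ (mul_le_mul_of_nonneg_left
      (h.norm_wronskianPotential_le (hne z hz) (hderiv2 z hz)) (sq_nonneg _)).trans
      (sq_mul_realRootedBound_le hσ hz (Complex.abs_im_le_norm z)))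
    (Asymptotics.isLittleO_iff.2 fun ε hε ↦ by
      obtain ⟨δ, hδ, hδε⟩ := exists_eventually_realRootedBound_le b hσ hε
      obtain ⟨M, hM⟩ := haxis δ hδ
      filter_upwards [hδε M, eventually_gt_atTop 0] with y hy hy0
      rw [norm_pow, Complex.norm_real, Real.norm_eq_abs, sq_abs]
      exact (h.norm_wronskianPotential_le (hne _ (by simpa using hy0.ne')) (hM y hy0)).trans hy)
  exact h.exists_eq_mul_sinc_of_wronskianPotential_affine hle hV

end IsWronskianPair

section ContinuousConvergence

variable {ι α β γ : Type*} [TopologicalSpace α] [TopologicalSpace β] [TopologicalSpace γ]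
  {l : Filter ι}

/-- Continuous convergence of `F i` to `f` along `l`: one has `F i y → f x` as `i → l` and `y → x`
jointly. For continuous `f` this is locally uniform convergence, but it lives on plain topological
spaces and passes through algebraic operations like an ordinary limit. -/
def TendstoContinuously (F : ι → α → β) (f : α → β) (l : Filter ι) : Prop :=
  ∀ x, Tendsto (fun q : ι × α ↦ F q.1 q.2) (l ×ˢ 𝓝 x) (𝓝 (f x))

theorem tendstoContinuously_of_forall_ultrafilter {F : ι → α → β} {f : α → β}
    (h : ∀ U : Ultrafilter ι, ↑U ≤ l → TendstoContinuously F f U) : TendstoContinuously F f l := by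
  refine fun x ↦ (tendsto_iff_ultrafilter _ _ _).2 fun G hG ↦ ?_
  have hfst : Tendsto Prod.fst (G : Filter (ι × α)) l := tendsto_fst.mono_left hG
  have hsnd : Tendsto Prod.snd (G : Filter (ι × α)) (𝓝 x) := tendsto_snd.mono_left hG
  exact (h (G.map Prod.fst) hfst x).comp (le_prod.2 ⟨tendsto_map, hsnd⟩)

namespace TendstoContinuously

variable {F : ι → α → β} {f : α → β}

theorem tendsto_comp (h : TendstoContinuously F f l) {u : ι → α} {x : α}
    (hu : Tendsto u l (𝓝 x)) : Tendsto (fun i ↦ F i (u i)) l (𝓝 (f x)) :=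
  (h x).comp (tendsto_id.prodMk hu)

theorem tendsto_apply (h : TendstoContinuously F f l) (x : α) :
    Tendsto (fun i ↦ F i x) l (𝓝 (f x)) :=
  h.tendsto_comp tendsto_const_nhds

theorem comp_right (h : TendstoContinuously F f l) {g : γ → α} (hg : Continuous g) :
    TendstoContinuously (fun i ↦ F i ∘ g) (f ∘ g) l := fun x ↦
  (h (g x)).comp (tendsto_id.prodMap (hg.tendsto x))

theorem comp_left (h : TendstoContinuously F f l) {g : β → γ} (hg : Continuous g) :
    TendstoContinuously (fun i ↦ g ∘ F i) (g ∘ f) l := fun x ↦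
  (hg.tendsto (f x)).comp (h x)

theorem continuous [RegularSpace β] [l.NeBot] (h : TendstoContinuously F f l) :
    Continuous f := by
  refine continuous_iff_continuousAt.2 fun x ↦ ?_
  refine (closed_nhds_basis (f x)).tendsto_right_iff.2 fun V ⟨hV, hVc⟩ ↦ ?_
  obtain ⟨pa, ha, pb, hb, hab⟩ := eventually_prod_iff.1 ((h x).eventually hV)
  filter_upwards [hb] with y hy
  exact hVc.mem_of_tendsto (h.tendsto_apply y) (ha.mono fun i hi ↦ hab hi hy)

theorem tendstoLocallyUniformly {δ : Type*} [UniformSpace δ] {F : ι → α → δ} {f : α → δ}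
    (h : TendstoContinuously F f l) (hf : Continuous f) : TendstoLocallyUniformly F f l := by
  refine tendstoLocallyUniformly_iff_forall_tendsto.2 fun x ↦ ?_
  exact (((hf.tendsto x).comp tendsto_snd).prodMk_nhds (h x)).mono_right
    (nhds_le_uniformity (f x))

end TendstoContinuously

theorem TendstoContinuously.differentiable {F : ι → ℂ → ℂ} {f : ℂ → ℂ} [l.NeBot]
    (h : TendstoContinuously F f l) (hF : ∀ i, Differentiable ℂ (F i)) : Differentiable ℂ f :=
  differentiableOn_univ.1 <|
    (tendstoLocallyUniformlyOn_univ.2 (h.tendstoLocallyUniformly h.continuous)).differentiableOn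
      (.of_forall fun i ↦ (hF i).differentiableOn) isOpen_univ

theorem TendstoContinuously.tendsto_deriv {F : ι → ℂ → ℂ} {f : ℂ → ℂ} [l.NeBot]
    (h : TendstoContinuously F f l) (hF : ∀ i, Differentiable ℂ (F i)) (z : ℂ) :
    Tendsto (fun i ↦ deriv (F i) z) l (𝓝 (deriv f z)) :=
  ((tendstoLocallyUniformlyOn_univ.2 (h.tendstoLocallyUniformly h.continuous)).deriv
    (.of_forall fun i ↦ (hF i).differentiableOn) isOpen_univ).tendsto_at (mem_univ z)

end ContinuousConvergence

section Montel

variable {ι E : Type*} [NormedAddCommGroup E] [NormedSpace ℂ E]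

theorem dist_le_mul_dist_of_norm_le {f : E → ℂ} (hf : Differentiable ℂ f) {M : ℝ} {x y : E}
    (hM : ∀ z, ‖z‖ ≤ ‖x‖ + 1 → ‖f z‖ ≤ M) (hy : y ∈ Metric.ball x 1) :
    dist (f y) (f x) ≤ 2 * M * dist y x := by
  have hmaps : MapsTo f (Metric.ball x 1) (Metric.closedBall (f x) (2 * M)) := fun z hz ↦ by
    have hz' : ‖z‖ ≤ ‖x‖ + 1 := by
      linarith [norm_le_norm_add_norm_sub x z, norm_sub_rev x z, mem_ball_iff_norm.1 hz]
    rw [mem_closedBall_iff_norm]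
    linarith [norm_sub_le (f z) (f x), hM z hz', hM x (by linarith)]
  simpa using Complex.dist_le_div_mul_dist_of_mapsTo_ball hf.differentiableOn hmaps hy

/-- Montel's theorem along an ultrafilter: no subsequence has to be extracted. -/
theorem exists_tendstoContinuously_of_norm_le {U : Ultrafilter ι} {F : ι → E → ℂ}
    (hF : ∀ i, Differentiable ℂ (F i))
    (hb : ∀ R : ℝ, ∃ M : ℝ, ∀ᶠ i in (U : Filter ι), ∀ z, ‖z‖ ≤ R → ‖F i z‖ ≤ M) :
    ∃ f : E → ℂ, TendstoContinuously F f U := by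
  have hlim : ∀ z, ∃ a, Tendsto (fun i ↦ F i z) U (𝓝 a) := fun z ↦ by
    obtain ⟨M, hM⟩ := hb ‖z‖
    obtain ⟨a, -, ha⟩ := (isCompact_closedBall (0 : ℂ) M).ultrafilter_le_nhds (U.map (F · z))
      (le_principal_iff.2 (hM.mono fun i hi ↦ by simpa using hi z le_rfl))
    exact ⟨a, ha⟩
  choose f hf using hlim
  refine ⟨f, fun x ↦ ?_⟩
  obtain ⟨M, hM⟩ := hb (‖x‖ + 1)
  have hdist : Tendsto (fun q : ι × E ↦ dist (F q.1 q.2) (F q.1 x)) (↑U ×ˢ 𝓝 x) (𝓝 0) := by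
    have hle : ∀ᶠ q in (U : Filter ι) ×ˢ 𝓝 x,
        dist (F q.1 q.2) (F q.1 x) ≤ 2 * M * dist q.2 x := by
      filter_upwards [hM.prod_mk (Metric.ball_mem_nhds x one_pos)] with q hq
      exact dist_le_mul_dist_of_norm_le (hF q.1) hq.1 hq.2
    have hzero : Tendsto (fun q : ι × E ↦ 2 * M * dist q.2 x) (↑U ×ˢ 𝓝 x) (𝓝 0) := by
      simpa using ((tendsto_snd (f := (U : Filter ι)) (g := 𝓝 x)).dist
        (tendsto_const_nhds (x := x))).const_mul (2 * M)
    exact squeeze_zero' (.of_forall fun _ ↦ dist_nonneg) hle hzero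
  exact ((hf x).comp tendsto_fst).congr_dist <| by
    simpa only [Function.comp_apply, dist_comm] using hdist

end Montel

section OrthonormalPolynomials

/-- `p n` has degree `n`, and the `p n` are orthonormal in `L²(μ)`. The signs of the leading
coefficients are left open: the Christoffel–Darboux kernel does not see them. -/
structure IsOrthonormalPolynomials (μ : Measure ℝ) (p : ℕ → ℝ[X]) : Prop where
  natDegree_eq : ∀ n, (p n).natDegree = n
  integral_mul : ∀ m n, ∫ x, (p m).eval x * (p n).eval x ∂μ = if m = n then 1 else 0

namespace IsOrthonormalPolynomials

variable {μ : Measure ℝ} {p : ℕ → ℝ[X]}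

theorem ne_zero (h : IsOrthonormalPolynomials μ p) (n : ℕ) : p n ≠ 0 := fun h0 ↦ by
  simpa [h0] using h.integral_mul n n

theorem exists_eq_sum_of_degree_lt (h : IsOrthonormalPolynomials μ p) {n : ℕ} {q : ℝ[X]}
    (hq : q.degree < n) : ∃ c : ℕ → ℝ, q = ∑ j ∈ Finset.range n, c j • p j := by
  let S : Polynomial.Sequence ℝ := ⟨p, fun i ↦ by
    rw [Polynomial.degree_eq_natDegree (h.ne_zero i), h.natDegree_eq]⟩
  have hspan : q ∈ Submodule.span ℝ (S '' (Finset.range n : Set ℕ)) := by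
    rw [Finset.coe_range, S.span_degreeLT fun i _ ↦
      (Polynomial.leadingCoeff_ne_zero.2 (h.ne_zero i)).isUnit]
    exact Polynomial.mem_degreeLT.2 hq
  obtain ⟨c, hc⟩ := Submodule.mem_span_image_finset_iff_exists_fun' ℝ |>.1 hspan
  exact ⟨c, hc.symm⟩

theorem memLp_eval (h : IsOrthonormalPolynomials μ p) (q : ℝ[X]) : MemLp (q.eval ·) 2 μ := by
  have hp : ∀ n, MemLp (fun x ↦ (p n).eval x) 2 μ := fun n ↦ by
    refine (memLp_two_iff_integrable_sq (p n).continuous.aestronglyMeasurable).2 ?_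
    by_contra hn
    simpa [← pow_two, integral_undef hn] using h.integral_mul n n
  obtain ⟨n, hn⟩ : ∃ n : ℕ, q.degree < n := ⟨q.natDegree + 1,
    Polynomial.degree_le_natDegree.trans_lt (by exact_mod_cast q.natDegree.lt_succ_self)⟩
  obtain ⟨c, rfl⟩ := h.exists_eq_sum_of_degree_lt hn
  simp only [Polynomial.eval_finsetSum, Polynomial.eval_smul]
  exact memLp_finsetSum _ fun j _ ↦ (hp j).const_smul (c j)

theorem integrable_eval_mul_eval (h : IsOrthonormalPolynomials μ p) (q r : ℝ[X]) :
    Integrable (fun x ↦ q.eval x * r.eval x) μ :=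
  (h.memLp_eval q).integrable_mul (h.memLp_eval r)

theorem integral_sum_smul_mul (h : IsOrthonormalPolynomials μ p) (n m : ℕ) (c : ℕ → ℝ) :
    ∫ x, (∑ j ∈ Finset.range n, c j • p j).eval x * (p m).eval x ∂μ =
      if m < n then c m else 0 := by
  simp only [Polynomial.eval_finsetSum, Polynomial.eval_smul, smul_eq_mul, Finset.sum_mul,
    mul_assoc]
  rw [integral_finsetSum _ fun j _ ↦ (h.integrable_eval_mul_eval (p j) (p m)).const_mul (c j)]
  simp [integral_const_mul, h.integral_mul]

theorem integral_mul_eq_zero_of_degree_lt (h : IsOrthonormalPolynomials μ p) {n m : ℕ}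
    {q : ℝ[X]} (hq : q.degree < n) (hm : n ≤ m) : ∫ x, q.eval x * (p m).eval x ∂μ = 0 := by
  obtain ⟨c, rfl⟩ := h.exists_eq_sum_of_degree_lt hq
  rw [h.integral_sum_smul_mul, if_neg hm.not_gt]

theorem eq_sum_integral_of_degree_lt (h : IsOrthonormalPolynomials μ p) {n : ℕ} {q : ℝ[X]}
    (hq : q.degree < n) :
    q = ∑ j ∈ Finset.range n, (∫ x, q.eval x * (p j).eval x ∂μ) • p j := by
  obtain ⟨c, rfl⟩ := h.exists_eq_sum_of_degree_lt hq
  refine Finset.sum_congr rfl fun j hj ↦ ?_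
  rw [h.integral_sum_smul_mul, if_pos (Finset.mem_range.1 hj)]

end IsOrthonormalPolynomials

/-- The entry `∫ x p_i(x) p_j(x) dμ(x)` of the Jacobi matrix, i.e. of multiplication by `x` in the
basis `p`. -/
noncomputable def jacobiEntry (μ : Measure ℝ) (p : ℕ → ℝ[X]) (i j : ℕ) : ℝ :=
  ∫ x, (Polynomial.X * p i).eval x * (p j).eval x ∂μ

theorem jacobiEntry_comm (μ : Measure ℝ) (p : ℕ → ℝ[X]) (i j : ℕ) :
    jacobiEntry μ p i j = jacobiEntry μ p j i :=
  integral_congr_ae (.of_forall fun x ↦ by simp only [Polynomial.eval_mul]; ring)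

namespace IsOrthonormalPolynomials

variable {μ : Measure ℝ} {p : ℕ → ℝ[X]}

theorem degree_X_mul_lt (h : IsOrthonormalPolynomials μ p) (n : ℕ) :
    (Polynomial.X * p n).degree < ((n + 2 : ℕ) : WithBot ℕ) := by
  rw [Polynomial.degree_mul, Polynomial.degree_X, Polynomial.degree_eq_natDegree (h.ne_zero n),
    h.natDegree_eq]
  exact_mod_cast (by omega : 1 + n < n + 2)

theorem X_mul_zero (h : IsOrthonormalPolynomials μ p) :
    Polynomial.X * p 0 = jacobiEntry μ p 0 0 • p 0 + jacobiEntry μ p 0 1 • p 1 := by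
  conv_lhs => rw [h.eq_sum_integral_of_degree_lt (h.degree_X_mul_lt 0)]
  simp [Finset.sum_range_succ, jacobiEntry]

theorem X_mul_succ (h : IsOrthonormalPolynomials μ p) (n : ℕ) :
    Polynomial.X * p (n + 1) = jacobiEntry μ p n (n + 1) • p n +
      jacobiEntry μ p (n + 1) (n + 1) • p (n + 1) +
      jacobiEntry μ p (n + 1) (n + 2) • p (n + 2) := by
  have hfar : ∀ k ∈ Finset.range n, jacobiEntry μ p (n + 1) k • p k = 0 := fun k hk ↦ by
    rw [jacobiEntry_comm, jacobiEntry, h.integral_mul_eq_zero_of_degree_lt (h.degree_X_mul_lt k)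
      (by have := Finset.mem_range.1 hk; omega), zero_smul]
  rw [h.eq_sum_integral_of_degree_lt (h.degree_X_mul_lt (n + 1))]
  change ∑ k ∈ Finset.range (n + 3), jacobiEntry μ p (n + 1) k • p k = _
  rw [Finset.sum_range_succ, Finset.sum_range_succ, Finset.sum_range_succ,
    Finset.sum_eq_zero hfar, zero_add, jacobiEntry_comm μ p (n + 1) n]

end IsOrthonormalPolynomials

end OrthonormalPolynomials

section ChristoffelDarboux

/-- The Christoffel–Darboux kernel `∑ j ≤ n, p_j(z) p_j(w)` at complex arguments, without
conjugation, so that it is holomorphic in both of them. -/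
noncomputable def complexCDKernel (p : ℕ → ℝ[X]) (n : ℕ) (z w : ℂ) : ℂ :=
  ∑ j ∈ Finset.range (n + 1), Polynomial.aeval z (p j) * Polynomial.aeval w (p j)

/-- The sum `∑ j ≤ n, |p_j(z)|²`, the value at `(z̄, z)` of the holomorphic kernel. -/
noncomputable def cdDiag (p : ℕ → ℝ[X]) (n : ℕ) (z : ℂ) : ℝ :=
  ∑ j ∈ Finset.range (n + 1), ‖Polynomial.aeval z (p j)‖ ^ 2

/-- The second solution `K_n(0, z) - z ∂₁K_n(0, z)` that goes with `z K_n(0, z)` in the Wronskian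
form of the Christoffel–Darboux formula. -/
noncomputable def cdCompanion (p : ℕ → ℝ[X]) (n : ℕ) (z : ℂ) : ℂ :=
  complexCDKernel p n 0 z - z * deriv (complexCDKernel p n · z) 0

variable {μ : Measure ℝ} {p : ℕ → ℝ[X]} {n : ℕ}

theorem aeval_complexOfReal (q : ℝ[X]) (x : ℝ) :
    Polynomial.aeval (x : ℂ) q = ((q.eval x : ℝ) : ℂ) :=
  Polynomial.aeval_ofReal q x

theorem complexCDKernel_ofReal (p : ℕ → ℝ[X]) (n : ℕ) (x y : ℝ) :
    complexCDKernel p n x y = CDKernel p n x y := by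
  simp [complexCDKernel, CDKernel, aeval_complexOfReal]

theorem complexCDKernel_conj (z w : ℂ) :
    complexCDKernel p n (starRingEnd ℂ z) (starRingEnd ℂ w) =
      starRingEnd ℂ (complexCDKernel p n z w) := by
  simp [complexCDKernel, Polynomial.aeval_conj]

theorem complexCDKernel_conj_self (z : ℂ) :
    complexCDKernel p n (starRingEnd ℂ z) z = cdDiag p n z := by
  simp [complexCDKernel, cdDiag, Polynomial.aeval_conj, Complex.conj_mul']

theorem cdDiag_nonneg (z : ℂ) : 0 ≤ cdDiag p n z :=
  Finset.sum_nonneg fun _ _ ↦ sq_nonneg _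

theorem cdDiag_ofReal (x : ℝ) : cdDiag p n x = CDKernel p n x x := by
  simp [cdDiag, CDKernel, aeval_complexOfReal, ← pow_two]

theorem norm_complexCDKernel_sq_le (z w : ℂ) :
    ‖complexCDKernel p n z w‖ ^ 2 ≤ cdDiag p n z * cdDiag p n w := by
  refine le_trans (pow_le_pow_left₀ (norm_nonneg _) (norm_sum_le _ _) 2) ?_
  simpa only [norm_mul, cdDiag] using Finset.sum_mul_sq_le_sq_mul_sq (Finset.range (n + 1)) _ _

theorem differentiable_uncurry_complexCDKernel (p : ℕ → ℝ[X]) (n : ℕ) :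
    Differentiable ℂ fun q : ℂ × ℂ ↦ complexCDKernel p n q.1 q.2 := by
  have hp : ∀ j, Differentiable ℂ fun z : ℂ ↦ Polynomial.aeval z (p j) :=
    fun j ↦ (p j).differentiable_aeval
  exact .fun_sum fun j _ ↦ ((hp j).comp differentiable_fst).mul ((hp j).comp differentiable_snd)

theorem differentiable_complexCDKernel_left (p : ℕ → ℝ[X]) (n : ℕ) (w : ℂ) :
    Differentiable ℂ fun z ↦ complexCDKernel p n z w :=
  .fun_sum fun j _ ↦ (p j).differentiable_aeval.mul_const _

theorem differentiable_complexCDKernel_right (p : ℕ → ℝ[X]) (n : ℕ) (z : ℂ) :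
    Differentiable ℂ fun w ↦ complexCDKernel p n z w :=
  .fun_sum fun j _ ↦ (p j).differentiable_aeval.const_mul _

theorem deriv_complexCDKernel_left (p : ℕ → ℝ[X]) (n : ℕ) (z w : ℂ) :
    deriv (complexCDKernel p n · w) z = ∑ j ∈ Finset.range (n + 1),
      Polynomial.aeval z (Polynomial.derivative (p j)) * Polynomial.aeval w (p j) :=
  (HasDerivAt.fun_sum fun j _ ↦ ((p j).hasDerivAt_aeval z).mul_const _).deriv

theorem differentiable_cdCompanion (p : ℕ → ℝ[X]) (n : ℕ) :
    Differentiable ℂ (cdCompanion p n) := by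
  unfold cdCompanion
  simp only [deriv_complexCDKernel_left]
  exact (differentiable_complexCDKernel_right p n 0).sub
    (differentiable_id.mul (.fun_sum fun j _ ↦ (p j).differentiable_aeval.const_mul _))

theorem cdCompanion_conj (z : ℂ) :
    cdCompanion p n (starRingEnd ℂ z) = starRingEnd ℂ (cdCompanion p n z) := by
  have hreal : ∀ q : ℝ[X], starRingEnd ℂ (Polynomial.aeval 0 q) = Polynomial.aeval 0 q :=
    fun q ↦ by simpa using (Polynomial.aeval_conj q (0 : ℂ)).symm
  simp only [cdCompanion, deriv_complexCDKernel_left]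
  simp only [complexCDKernel, Polynomial.aeval_conj, map_sub, map_mul, map_sum, hreal]

theorem IsOrthonormalPolynomials.sub_mul_complexCDKernel (h : IsOrthonormalPolynomials μ p)
    (n : ℕ) (z w : ℂ) : (w - z) * complexCDKernel p n z w = jacobiEntry μ p n (n + 1) *
      (Polynomial.aeval w (p (n + 1)) * Polynomial.aeval z (p n) -
        Polynomial.aeval z (p (n + 1)) * Polynomial.aeval w (p n)) := by
  induction n with
  | zero =>
    have hrec : ∀ z : ℂ, _ := fun z ↦ congrArg (Polynomial.aeval z) h.X_mul_zero
    simp only [map_mul, map_add, map_smul, Polynomial.aeval_X, Complex.real_smul] at hrec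
    simp only [complexCDKernel, zero_add, Finset.range_one, Finset.sum_singleton]
    linear_combination Polynomial.aeval z (p 0) * hrec w - Polynomial.aeval w (p 0) * hrec z
  | succ n ih =>
    have hrec : ∀ z : ℂ, _ := fun z ↦ congrArg (Polynomial.aeval z) (h.X_mul_succ n)
    simp only [map_mul, map_add, map_smul, Polynomial.aeval_X, Complex.real_smul] at hrec
    rw [complexCDKernel, Finset.sum_range_succ, ← complexCDKernel, mul_add, ih]
    linear_combination Polynomial.aeval z (p (n + 1)) * hrec w -
      Polynomial.aeval w (p (n + 1)) * hrec z

/-- The Wronskian form of the Christoffel–Darboux formula, in which the polynomials of degree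
`n + 1` no longer appear. -/
theorem IsOrthonormalPolynomials.complexCDKernel_zero_zero_mul
    (h : IsOrthonormalPolynomials μ p) (n : ℕ) (z w : ℂ) :
    complexCDKernel p n 0 0 * ((w - z) * complexCDKernel p n z w) =
      (w * complexCDKernel p n 0 w) * cdCompanion p n z -
        (z * complexCDKernel p n 0 z) * cdCompanion p n w := by
  set a : ℂ := ((jacobiEntry μ p n (n + 1) : ℝ) : ℂ)
  have hS : ∀ v : ℂ, v * complexCDKernel p n 0 v = a * (Polynomial.aeval v (p (n + 1)) *
      Polynomial.aeval 0 (p n) - Polynomial.aeval 0 (p (n + 1)) * Polynomial.aeval v (p n)) :=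
    fun v ↦ by simpa using h.sub_mul_complexCDKernel n 0 v
  have hC : ∀ v : ℂ, cdCompanion p n v =
      a * (Polynomial.aeval 0 (Polynomial.derivative (p (n + 1))) * Polynomial.aeval v (p n) -
        Polynomial.aeval v (p (n + 1)) * Polynomial.aeval 0 (Polynomial.derivative (p n))) := by
    intro v
    have hleft := ((hasDerivAt_const (0 : ℂ) v).sub (hasDerivAt_id 0)).mul
      (differentiable_complexCDKernel_left p n v 0).hasDerivAt
    have hright := ((((p n).hasDerivAt_aeval (0 : ℂ)).const_mul
      (Polynomial.aeval v (p (n + 1)))).sub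
      (((p (n + 1)).hasDerivAt_aeval 0).mul_const (Polynomial.aeval v (p n)))).const_mul a
    have heq := hleft.unique (hright.congr_of_eventuallyEq
      (.of_forall fun z ↦ h.sub_mul_complexCDKernel n z v))
    simp only [Pi.sub_apply, id] at heq
    rw [cdCompanion]
    linear_combination -heq
  have hconfluent := hC 0
  simp only [cdCompanion, zero_mul, sub_zero] at hconfluent
  rw [h.sub_mul_complexCDKernel, hconfluent, hS, hS, hC, hC]
  ring

theorem IsOrthonormalPolynomials.cdDiag_pos (h : IsOrthonormalPolynomials μ p) (n : ℕ) (z : ℂ) :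
    0 < cdDiag p n z := by
  refine Finset.sum_pos' (fun _ _ ↦ sq_nonneg _) ⟨0, by simp, ?_⟩
  obtain ⟨c, hc⟩ := Polynomial.natDegree_eq_zero.1 (h.natDegree_eq 0)
  have hc0 : c ≠ 0 := fun h0 ↦ h.ne_zero 0 (by rw [← hc, h0, map_zero])
  rw [← hc, Polynomial.aeval_C]
  simpa [sq_pos_iff] using hc0

theorem IsOrthonormalPolynomials.im_eq_zero_of_complexCDKernel_zero_eq_zero
    (h : IsOrthonormalPolynomials μ p) {w : ℂ} (hw : complexCDKernel p n 0 w = 0) :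
    w.im = 0 := by
  have hconj : complexCDKernel p n 0 (starRingEnd ℂ w) = 0 := by
    simpa [hw] using complexCDKernel_conj (p := p) (n := n) 0 w
  have hformula := h.complexCDKernel_zero_zero_mul n (starRingEnd ℂ w) w
  have hpos : ∀ z, complexCDKernel p n (starRingEnd ℂ z) z ≠ 0 := fun z ↦ by
    rw [complexCDKernel_conj_self]
    exact_mod_cast (h.cdDiag_pos n z).ne'
  have h00 : complexCDKernel p n 0 0 ≠ 0 := by simpa using hpos 0
  simp only [hw, hconj, mul_zero, zero_mul, sub_zero, mul_eq_zero, h00, hpos w, or_false,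
    false_or, sub_eq_zero] at hformula
  exact Complex.conj_eq_iff_im.1 hformula.symm

theorem IsOrthonormalPolynomials.exists_complexCDKernel_zero_eq_realRootProd
    (h : IsOrthonormalPolynomials μ p) (h0 : complexCDKernel p n 0 0 = 1) :
    ∃ (ι : Type) (_ : Fintype ι) (u : ι → ℝ),
      ∀ z, complexCDKernel p n 0 z = realRootProd u z := by
  set q : ℂ[X] := ∑ j ∈ Finset.range (n + 1),
    Polynomial.C (Polynomial.aeval (0 : ℂ) (p j)) * (p j).map (algebraMap ℝ ℂ) with hq
  have heval : ∀ z, q.eval z = complexCDKernel p n 0 z := fun z ↦ by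
    simp [hq, complexCDKernel, Polynomial.eval_finsetSum, Polynomial.eval_map_algebraMap]
  simp only [← heval] at h0 ⊢
  exact exists_eval_eq_realRootProd h0 fun z hz ↦
    h.im_eq_zero_of_complexCDKernel_zero_eq_zero ((heval z).symm.trans hz)

theorem norm_cdCompanion_le {M : ℝ} {w : ℂ}
    (hM : ∀ z, ‖z‖ ≤ 1 → ‖complexCDKernel p n z w‖ ≤ M) :
    ‖cdCompanion p n w‖ ≤ (1 + ‖w‖) * M := by
  have hderiv : ‖deriv (complexCDKernel p n · w) 0‖ ≤ M / 1 :=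
    Complex.norm_deriv_le_of_forall_mem_sphere_norm_le one_pos
      (differentiable_complexCDKernel_left p n w).diffContOnCl
      fun z hz ↦ hM z (mem_sphere_zero_iff_norm.1 hz).le
  calc ‖cdCompanion p n w‖
      ≤ ‖complexCDKernel p n 0 w‖ + ‖w‖ * ‖deriv (complexCDKernel p n · w) 0‖ :=
        (norm_sub_le _ _).trans_eq (by rw [norm_mul])
    _ ≤ M + ‖w‖ * M := by
        gcongr
        · exact hM 0 (by simp)
        · simpa using hderiv
    _ = (1 + ‖w‖) * M := by ring

theorem IsOrthonormalPolynomials.integrable_CDKernel_mul_CDKernel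
    (h : IsOrthonormalPolynomials μ p) (n : ℕ) (x y : ℝ) :
    Integrable (fun t ↦ CDKernel p n x t * CDKernel p n y t) μ := by
  have hmem : ∀ x, MemLp (CDKernel p n x) 2 μ := fun x ↦
    memLp_finsetSum _ fun j _ ↦ (h.memLp_eval (p j)).const_mul ((p j).eval x)
  exact (hmem x).integrable_mul (hmem y)

theorem IsOrthonormalPolynomials.integral_CDKernel_mul_CDKernel
    (h : IsOrthonormalPolynomials μ p) (n : ℕ) (x y : ℝ) :
    ∫ t, CDKernel p n x t * CDKernel p n y t ∂μ = CDKernel p n x y := by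
  have hInt : ∀ i j, Integrable (fun t ↦ (p i).eval x * (p j).eval y *
      ((p i).eval t * (p j).eval t)) μ := fun i j ↦
    (h.integrable_eval_mul_eval (p i) (p j)).const_mul _
  have hexpand : ∀ t, CDKernel p n x t * CDKernel p n y t =
      ∑ i ∈ Finset.range (n + 1), ∑ j ∈ Finset.range (n + 1),
        (p i).eval x * (p j).eval y * ((p i).eval t * (p j).eval t) := fun t ↦ by
    simp only [CDKernel, Finset.sum_mul_sum, mul_mul_mul_comm]
  simp only [hexpand]
  rw [integral_finsetSum _ fun i _ ↦ integrable_finsetSum _ fun j _ ↦ hInt i j, CDKernel]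
  refine Finset.sum_congr rfl fun i hi ↦ ?_
  rw [integral_finsetSum _ fun j _ ↦ hInt i j]
  simp [integral_const_mul, h.integral_mul, Finset.mem_range.1 hi]

end ChristoffelDarboux

section KernelLimits

variable {ι : Type*} {l : Filter ι} {U : Ultrafilter ι} {μ : Measure ℝ} {p : ℕ → ℝ[X]} {n : ℕ}
  {ν : ι → Measure ℝ} {q : ι → ℕ → ℝ[X]} {N : ι → ℕ} {z w : ℂ} {M : ℝ}

theorem norm_complexCDKernel_le (hz : cdDiag p n z ≤ M) (hw : cdDiag p n w ≤ M) :
    ‖complexCDKernel p n z w‖ ≤ M := by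
  have hM : 0 ≤ M := (cdDiag_nonneg z).trans hz
  refine le_of_sq_le_sq ?_ hM
  calc ‖complexCDKernel p n z w‖ ^ 2 ≤ cdDiag p n z * cdDiag p n w :=
        norm_complexCDKernel_sq_le z w
    _ ≤ M ^ 2 := by
        rw [pow_two]
        exact mul_le_mul hz hw (cdDiag_nonneg w) hM

theorem differentiable_id_mul_complexCDKernel (p : ℕ → ℝ[X]) (n : ℕ) :
    Differentiable ℂ fun z ↦ z * complexCDKernel p n 0 z :=
  differentiable_id.mul (differentiable_complexCDKernel_right p n 0)

theorem norm_deriv_id_mul_complexCDKernel_sq_le (h : IsOrthonormalPolynomials μ p)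
    (h0 : complexCDKernel p n 0 0 = 1)
    (hM : ∀ z ∈ Metric.sphere (0 : ℂ) 1, ‖complexCDKernel p n 0 z‖ ≤ M) (hz : z.im ≠ 0) :
    ‖deriv (fun z ↦ z * complexCDKernel p n 0 z) z‖ ^ 2 ≤
      2 * realRootedBound M (M ^ 2 + 2 * M) ‖z‖ ((M ^ 2 + 2 * M) * (‖z‖ ^ 2 / z.im ^ 2)) *
        ‖z * complexCDKernel p n 0 z‖ ^ 2 := by
  obtain ⟨κ, _, u, hu⟩ := h.exists_complexCDKernel_zero_eq_realRootProd h0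
  simp only [hu] at hM ⊢
  have hσ := sum_sq_le_of_norm_realRootProd_le hM
  exact norm_deriv_id_mul_realRootProd_sq_le hz (abs_sum_le_of_norm_realRootProd_le hM) hσ
    ((sum_norm_div_one_sub_sq_le hz).trans (by gcongr))

theorem norm_deriv_deriv_id_mul_complexCDKernel_le (h : IsOrthonormalPolynomials μ p)
    (h0 : complexCDKernel p n 0 0 = 1)
    (hM : ∀ z ∈ Metric.sphere (0 : ℂ) 1, ‖complexCDKernel p n 0 z‖ ≤ M) (hz : z.im ≠ 0) :
    ‖deriv (deriv fun z ↦ z * complexCDKernel p n 0 z) z‖ ≤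
      realRootedBound M (M ^ 2 + 2 * M) ‖z‖ ((M ^ 2 + 2 * M) * (‖z‖ ^ 2 / z.im ^ 2)) *
        ‖z * complexCDKernel p n 0 z‖ := by
  obtain ⟨κ, _, u, hu⟩ := h.exists_complexCDKernel_zero_eq_realRootProd h0
  simp only [hu] at hM ⊢
  have hσ := sum_sq_le_of_norm_realRootProd_le hM
  exact norm_deriv_deriv_id_mul_realRootProd_le hz (abs_sum_le_of_norm_realRootProd_le hM) hσ
    ((sum_norm_div_one_sub_sq_le hz).trans (by gcongr))

theorem norm_deriv_deriv_id_mul_complexCDKernel_mul_I_le (h : IsOrthonormalPolynomials μ p)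
    (h0 : complexCDKernel p n 0 0 = 1)
    (hM : ∀ z ∈ Metric.sphere (0 : ℂ) 1, ‖complexCDKernel p n 0 z‖ ≤ M) {y L : ℝ} (hy : 0 < y)
    (hL : cdDiag p n (y * Complex.I) ≤ Real.exp L) :
    ‖deriv (deriv fun z ↦ z * complexCDKernel p n 0 z) (y * Complex.I)‖ ≤
      realRootedBound M (M ^ 2 + 2 * M) y (L / y ^ 2) *
        ‖y * Complex.I * complexCDKernel p n 0 (y * Complex.I)‖ := by
  have hzero : cdDiag p n 0 = 1 := by
    have := complexCDKernel_conj_self (p := p) (n := n) 0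
    rw [map_zero, h0] at this
    exact_mod_cast this.symm
  have hsq : ‖complexCDKernel p n 0 (y * Complex.I)‖ ^ 2 ≤ Real.exp L :=
    (norm_complexCDKernel_sq_le _ _).trans (by rwa [hzero, one_mul])
  have him : (y * Complex.I : ℂ).im ≠ 0 := by simpa using hy.ne'
  obtain ⟨κ, _, u, hu⟩ := h.exists_complexCDKernel_zero_eq_realRootProd h0
  simp only [hu] at hM hsq ⊢
  simpa [abs_of_pos hy] using
    norm_deriv_deriv_id_mul_realRootProd_le him (abs_sum_le_of_norm_realRootProd_le hM)
      (sum_sq_le_of_norm_realRootProd_le hM)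
      (sum_norm_div_one_sub_sq_le_of_norm_sq_le_exp hy.ne' hsq)

/-- Along `l`, the functions `F i` grow more slowly than every Gaussian, with constants that do not
depend on the radius of the disc on which the bound is eventually valid. -/
def SubgaussianGrowth (F : ι → ℂ → ℝ) (l : Filter ι) : Prop :=
  ∀ ε : ℝ, 0 < ε → ∃ C : ℝ, ∀ R : ℝ, ∀ᶠ i in l, ∀ z : ℂ, ‖z‖ < R →
    F i z ≤ C * Real.exp (ε * ‖z‖ ^ 2)

theorem SubgaussianGrowth.mono {F : ι → ℂ → ℝ} {l' : Filter ι} (h : SubgaussianGrowth F l)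
    (hl : l' ≤ l) : SubgaussianGrowth F l' := fun ε hε ↦
  (h ε hε).imp fun _ hC R ↦ (hC R).filter_mono hl

theorem SubgaussianGrowth.exists_eventually_le_exp {F : ι → ℂ → ℝ} (h : SubgaussianGrowth F l)
    {ε : ℝ} (hε : 0 < ε) :
    ∃ L : ℝ, ∀ R : ℝ, ∀ᶠ i in l, ∀ z : ℂ, ‖z‖ < R → F i z ≤ Real.exp (L + ε * ‖z‖ ^ 2) := by
  obtain ⟨C, hC⟩ := h ε hε
  refine ⟨Real.log (max C 1), fun R ↦ (hC R).mono fun i hi z hz ↦ (hi z hz).trans ?_⟩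
  rw [Real.exp_add, Real.exp_log (by positivity)]
  gcongr
  exact le_max_left C 1

theorem SubgaussianGrowth.exists_eventually_le {F : ι → ℂ → ℝ} (h : SubgaussianGrowth F l)
    (R : ℝ) : ∃ M : ℝ, ∀ᶠ i in l, ∀ z : ℂ, ‖z‖ ≤ R → F i z ≤ M := by
  obtain ⟨L, hL⟩ := h.exists_eventually_le_exp one_pos
  refine ⟨Real.exp (L + 1 * R ^ 2), (hL (R + 1)).mono fun i hi z hz ↦ ?_⟩
  refine (hi z (by linarith)).trans ?_
  gcongr

/-- Christoffel–Darboux kernels of varying measures, normalized to be `1` at the origin and with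
diagonal tending to `1`: what rescaling around a point with the Lubinsky wiggle condition gives. -/
structure IsNormalizedKernelFamily (ν : ι → Measure ℝ) (q : ι → ℕ → ℝ[X]) (N : ι → ℕ)
    (l : Filter ι) : Prop where
  orthonormal : ∀ i, IsOrthonormalPolynomials (ν i) (q i)
  kernel_zero_zero : ∀ i, CDKernel (q i) (N i) 0 0 = 1
  tendsto_diag : ∀ x, Tendsto (fun i ↦ CDKernel (q i) (N i) x x) l (𝓝 1)
  subgaussian : SubgaussianGrowth (fun i ↦ cdDiag (q i) (N i)) l

namespace IsNormalizedKernelFamily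

theorem mono {l' : Filter ι} (h : IsNormalizedKernelFamily ν q N l) (hl : l' ≤ l) :
    IsNormalizedKernelFamily ν q N l' :=
  ⟨h.orthonormal, h.kernel_zero_zero, fun x ↦ (h.tendsto_diag x).mono_left hl,
    h.subgaussian.mono hl⟩

theorem complexCDKernel_zero_zero (h : IsNormalizedKernelFamily ν q N l) (i : ι) :
    complexCDKernel (q i) (N i) 0 0 = 1 := by
  simpa [h.kernel_zero_zero i] using complexCDKernel_ofReal (q i) (N i) 0 0

theorem exists_eventually_norm_complexCDKernel_le (h : IsNormalizedKernelFamily ν q N l) (R : ℝ) :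
    ∃ M : ℝ, ∀ᶠ i in l, ∀ z w : ℂ, ‖z‖ ≤ R → ‖w‖ ≤ R →
      ‖complexCDKernel (q i) (N i) z w‖ ≤ M :=
  (h.subgaussian.exists_eventually_le R).imp fun _ hM ↦ hM.mono fun _ hi z w hz hw ↦
    norm_complexCDKernel_le (hi z hz) (hi w hw)

theorem exists_tendstoContinuously_complexCDKernel (h : IsNormalizedKernelFamily ν q N U) :
    ∃ k : ℂ × ℂ → ℂ,
      TendstoContinuously (fun i x ↦ complexCDKernel (q i) (N i) x.1 x.2) k U :=
  exists_tendstoContinuously_of_norm_le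
    (fun i ↦ differentiable_uncurry_complexCDKernel (q i) (N i)) fun R ↦
    (h.exists_eventually_norm_complexCDKernel_le R).imp fun _ hM ↦ hM.mono fun _ hi x hx ↦
      hi x.1 x.2 ((norm_fst_le x).trans hx) ((norm_snd_le x).trans hx)

theorem exists_tendstoContinuously_cdCompanion (h : IsNormalizedKernelFamily ν q N U) :
    ∃ c : ℂ → ℂ, TendstoContinuously (fun i ↦ cdCompanion (q i) (N i)) c U := by
  refine exists_tendstoContinuously_of_norm_le
    (fun i ↦ differentiable_cdCompanion (q i) (N i)) fun R ↦ ?_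
  obtain ⟨M, hM⟩ := h.exists_eventually_norm_complexCDKernel_le (max 1 R)
  refine ⟨(1 + R) * M, hM.mono fun i hi z hz ↦ ?_⟩
  have hM0 : 0 ≤ M := (norm_nonneg _).trans (hi 0 0 (by simp) (by simp))
  refine (norm_cdCompanion_le fun w hw ↦ hi w z (hw.trans (le_max_left 1 R))
    (hz.trans (le_max_right 1 R))).trans ?_
  gcongr

end IsNormalizedKernelFamily

/-- A joint limit of the kernels and the companions of a normalized kernel family. -/
structure IsKernelLimit (q : ι → ℕ → ℝ[X]) (N : ι → ℕ) (l : Filter ι) (k : ℂ × ℂ → ℂ)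
    (c : ℂ → ℂ) : Prop where
  kernel : TendstoContinuously (fun i x ↦ complexCDKernel (q i) (N i) x.1 x.2) k l
  companion : TendstoContinuously (fun i ↦ cdCompanion (q i) (N i)) c l

namespace IsKernelLimit

variable {k : ℂ × ℂ → ℂ} {c : ℂ → ℂ}

theorem tendstoContinuously_id_mul (h : IsKernelLimit q N l k c) :
    TendstoContinuously (fun i z ↦ z * complexCDKernel (q i) (N i) 0 z) (fun z ↦ z * k (0, z)) l :=
  fun z ↦ tendsto_snd.mul (h.kernel.comp_right (Continuous.prodMk_right (0 : ℂ)) z)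

theorem tendsto_CDKernel (h : IsKernelLimit q N l k c) (x y : ℝ) :
    Tendsto (fun i ↦ ((CDKernel (q i) (N i) x y : ℝ) : ℂ)) l (𝓝 (k (x, y))) := by
  simpa only [complexCDKernel_ofReal] using h.kernel.tendsto_apply ((x : ℂ), (y : ℂ))

variable [l.NeBot]

theorem sub_mul_eq (h : IsKernelLimit q N l k c) (hq : IsNormalizedKernelFamily ν q N l)
    (z w : ℂ) : (w - z) * k (z, w) = w * k (0, w) * c z - z * k (0, z) * c w := by
  have hS := h.tendstoContinuously_id_mul.tendsto_apply
  have hc := h.companion.tendsto_apply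
  refine tendsto_nhds_unique ((h.kernel.tendsto_apply (z, w)).const_mul (w - z)) ?_
  refine (((hS w).mul (hc z)).sub ((hS z).mul (hc w))).congr fun i ↦ ?_
  simpa [hq.complexCDKernel_zero_zero i] using
    ((hq.orthonormal i).complexCDKernel_zero_zero_mul (N i) z w).symm

theorem im_ofReal (h : IsKernelLimit q N l k c) (x y : ℝ) : (k (x, y)).im = 0 :=
  tendsto_nhds_unique ((Complex.continuous_im.tendsto _).comp (h.tendsto_CDKernel x y))
    (by simp [Function.comp_def])

theorem diag_ofReal (h : IsKernelLimit q N l k c) (hq : IsNormalizedKernelFamily ν q N l)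
    (x : ℝ) : k (x, x) = 1 :=
  tendsto_nhds_unique (h.tendsto_CDKernel x x)
    (by exact_mod_cast (Complex.continuous_ofReal.tendsto _).comp (hq.tendsto_diag x))

theorem norm_ofReal_le_one (h : IsKernelLimit q N l k c) (hq : IsNormalizedKernelFamily ν q N l)
    (x y : ℝ) : ‖k (x, y)‖ ≤ 1 := by
  have hsq : ‖k (x, y)‖ ^ 2 ≤ 1 * 1 :=
    le_of_tendsto_of_tendsto' ((h.kernel.tendsto_apply ((x : ℂ), (y : ℂ))).norm.pow 2)
      ((hq.tendsto_diag x).mul (hq.tendsto_diag y)) fun i ↦ by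
        simpa only [cdDiag_ofReal] using norm_complexCDKernel_sq_le (x : ℂ) (y : ℂ)
  exact le_of_sq_le_sq (by simpa using hsq) zero_le_one

theorem isWronskianPair (h : IsKernelLimit q N l k c) (hq : IsNormalizedKernelFamily ν q N l) :
    IsWronskianPair (fun z ↦ z * k (0, z)) c where
  differentiable_left :=
    h.tendstoContinuously_id_mul.differentiable fun i ↦
      differentiable_id_mul_complexCDKernel (q i) (N i)
  differentiable_right :=
    h.companion.differentiable fun i ↦ differentiable_cdCompanion (q i) (N i)
  im_left x := by simpa using Or.inr (h.im_ofReal 0 x)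
  im_right x := by
    refine tendsto_nhds_unique
      ((Complex.continuous_im.tendsto _).comp (h.companion.tendsto_apply (x : ℂ))) ?_
    have hreal : ∀ i, (cdCompanion (q i) (N i) x).im = 0 := fun i ↦
      Complex.conj_eq_iff_im.1 (by rw [← cdCompanion_conj, Complex.conj_ofReal])
    simp [Function.comp_def, hreal]
  wronskian_ofReal x := by
    have hS := h.tendstoContinuously_id_mul.differentiable fun i ↦
      differentiable_id_mul_complexCDKernel (q i) (N i)
    have hc := h.companion.differentiable fun i ↦ differentiable_cdCompanion (q i) (N i)
    have hright := ((hS x).hasDerivAt.mul_const (c x)).sub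
      ((hc x).hasDerivAt.const_mul (x * k (0, x)))
    have hslope := hright.tendsto_slope
    have hk : Tendsto (fun w : ℂ ↦ k (x, w)) (𝓝[≠] (x : ℂ)) (𝓝 (k (x, x))) :=
      ((h.kernel.continuous.comp (Continuous.prodMk_right (x : ℂ))).tendsto _).mono_left
        nhdsWithin_le_nhds
    rw [← h.diag_ofReal hq x]
    refine tendsto_nhds_unique (hslope.congr' ?_) hk
    filter_upwards [self_mem_nhdsWithin] with w hw
    rw [slope_def_field, div_eq_iff (sub_ne_zero.2 hw), mul_comm (k _), h.sub_mul_eq hq]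
    simp

theorem tendsto_deriv_id_mul (h : IsKernelLimit q N l k c) (z : ℂ) :
    Tendsto (fun i ↦ deriv (fun z ↦ z * complexCDKernel (q i) (N i) 0 z) z) l
      (𝓝 (deriv (fun z ↦ z * k (0, z)) z)) :=
  h.tendstoContinuously_id_mul.tendsto_deriv
    (fun i ↦ differentiable_id_mul_complexCDKernel (q i) (N i)) z

theorem tendsto_deriv_deriv_id_mul (h : IsKernelLimit q N l k c) (z : ℂ) :
    Tendsto (fun i ↦ deriv (deriv fun z ↦ z * complexCDKernel (q i) (N i) 0 z) z) l
      (𝓝 (deriv (deriv fun z ↦ z * k (0, z)) z)) := by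
  have hlu := tendstoLocallyUniformlyOn_univ.2
    (h.tendstoContinuously_id_mul.tendstoLocallyUniformly h.tendstoContinuously_id_mul.continuous)
  have hdiff := fun i ↦ differentiable_id_mul_complexCDKernel (q i) (N i)
  have hlu' := hlu.deriv (.of_forall fun i ↦ (hdiff i).differentiableOn) isOpen_univ
  exact (hlu'.deriv (.of_forall fun i ↦ (hdiff i).deriv.differentiableOn) isOpen_univ).tendsto_at
    (mem_univ z)

theorem exists_eq_sinc (h : IsKernelLimit q N l k c) (hq : IsNormalizedKernelFamily ν q N l) :
    ∃ κ : ℝ, 0 ≤ κ ∧ ∀ x y : ℝ, k (x, y) = (Real.sinc (κ * (y - x)) : ℝ) := by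
  obtain ⟨M, hM⟩ := hq.exists_eventually_norm_complexCDKernel_le 1
  have hM0 : 0 ≤ M := by
    obtain ⟨i, hi⟩ := hM.exists
    exact (norm_nonneg _).trans (hi 0 0 (by simp) (by simp))
  replace hM : ∀ᶠ i in l, ∀ z ∈ Metric.sphere (0 : ℂ) 1, ‖complexCDKernel (q i) (N i) 0 z‖ ≤ M :=
    hM.mono fun i hi z hz ↦ hi 0 z (by simp) (mem_sphere_zero_iff_norm.1 hz).le
  have hS := h.tendstoContinuously_id_mul.tendsto_apply
  obtain ⟨κ, hκ, hk⟩ := (h.isWronskianPair hq).exists_eq_mul_sinc (b := M) (σ := M ^ 2 + 2 * M)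
    (by positivity)
    (fun x y ↦ by
      rw [← h.sub_mul_eq hq, norm_mul, ← Complex.ofReal_sub, Complex.norm_real, Real.norm_eq_abs]
      exact mul_le_of_le_one_right (abs_nonneg _) (h.norm_ofReal_le_one hq x y))
    (fun z hz ↦ le_of_tendsto_of_tendsto ((h.tendsto_deriv_id_mul z).norm.pow 2)
      (((hS z).norm.pow 2).const_mul _) <| hM.mono fun i hi ↦
        norm_deriv_id_mul_complexCDKernel_sq_le (hq.orthonormal i)
          (hq.complexCDKernel_zero_zero i) hi hz)
    (fun z hz ↦ le_of_tendsto_of_tendsto (h.tendsto_deriv_deriv_id_mul z).norm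
      ((hS z).norm.const_mul _) <| hM.mono fun i hi ↦
        norm_deriv_deriv_id_mul_complexCDKernel_le (hq.orthonormal i)
          (hq.complexCDKernel_zero_zero i) hi hz)
    (fun δ hδ ↦ by
      obtain ⟨L, hL⟩ := hq.subgaussian.exists_eventually_le_exp hδ
      refine ⟨L, fun y hy ↦ le_of_tendsto_of_tendsto (h.tendsto_deriv_deriv_id_mul _).norm
        ((hS (y * Complex.I)).norm.const_mul _) ?_⟩
      filter_upwards [hM, hL (y + 1)] with i hi hLi
      refine norm_deriv_deriv_id_mul_complexCDKernel_mul_I_le (hq.orthonormal i)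
        (hq.complexCDKernel_zero_zero i) hi hy ?_
      simpa [abs_of_pos hy] using hLi (y * Complex.I) (by simp [abs_of_pos hy]))
  refine ⟨κ, hκ, fun x y ↦ ?_⟩
  rcases eq_or_ne x y with rfl | hxy
  · simp [h.diag_ofReal hq]
  · have hyx : (y - x : ℂ) ≠ 0 := by exact_mod_cast sub_ne_zero.2 hxy.symm
    refine mul_left_cancel₀ hyx ?_
    rw [h.sub_mul_eq hq, hk]
    push_cast
    ring

end IsKernelLimit

theorem IsNormalizedKernelFamily.exists_tendstoContinuously_sinc
    (h : IsNormalizedKernelFamily ν q N U) :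
    ∃ κ : ℝ, 0 ≤ κ ∧ TendstoContinuously (fun i (x : ℝ × ℝ) ↦ CDKernel (q i) (N i) x.1 x.2)
      (fun x ↦ Real.sinc (κ * (x.2 - x.1))) U := by
  obtain ⟨k, hk⟩ := h.exists_tendstoContinuously_complexCDKernel
  obtain ⟨c, hc⟩ := h.exists_tendstoContinuously_cdCompanion
  obtain ⟨κ, hκ, hsinc⟩ := (IsKernelLimit.mk hk hc).exists_eq_sinc h
  refine ⟨κ, hκ, fun x ↦ ?_⟩
  have hre := (hk.comp_right (g := fun x : ℝ × ℝ ↦ ((x.1 : ℂ), (x.2 : ℂ)))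
    (by fun_prop)).comp_left Complex.continuous_re x
  simpa only [Function.comp_def, complexCDKernel_ofReal, hsinc, Complex.ofReal_re] using hre

end KernelLimits

section LebesguePoint

variable {ι : Type*} {l : Filter ι} {ν : ι → Measure ℝ} {μ : Measure ℝ} {x₀ R : ℝ}

/-- Vague convergence of `ν i` to Lebesgue measure along `l`, tested on windows around the origin.
No finiteness of `ν i` on the windows is required: by the convention for the integral of
non-integrable functions, testing on `f = 1` makes it hold eventually. -/
def TendstoLebesgueLocally (ν : ι → Measure ℝ) (l : Filter ι) : Prop :=
  ∀ R : ℝ, 0 < R → ∀ f : ℝ → ℝ, Continuous f →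
    Tendsto (fun i ↦ ∫ x in Ioo (-R) R, f x ∂ν i) l (𝓝 (∫ x in (-R)..R, f x))

theorem TendstoLebesgueLocally.mono {l' : Filter ι} (h : TendstoLebesgueLocally ν l)
    (hl : l' ≤ l) : TendstoLebesgueLocally ν l' := fun R hR f hf ↦ (h R hR f hf).mono_left hl

theorem TendstoLebesgueLocally.tendsto_measureReal (h : TendstoLebesgueLocally ν l) (hR : 0 < R) :
    Tendsto (fun i ↦ (ν i).real (Ioo (-R) R)) l (𝓝 (2 * R)) := by
  have h1 := h R hR (fun _ ↦ 1) continuous_const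
  have hlen : ∫ _ in (-R)..R, (1 : ℝ) = 2 * R := by
    rw [intervalIntegral.integral_const, smul_eq_mul]
    ring
  simpa [hlen, setIntegral_const] using h1

theorem integrableOn_Ioo_of_continuous {f : ℝ → ℝ} (hf : Continuous f) {a b : ℝ}
    (hμ : μ (Ioo a b) ≠ ⊤) : IntegrableOn f (Ioo a b) μ := by
  obtain ⟨M, hM⟩ := isCompact_Icc.exists_bound_of_continuousOn (s := Icc a b) hf.continuousOn
  exact .of_bound hμ.lt_top hf.aestronglyMeasurable M
    (ae_restrict_of_forall_mem measurableSet_Ioo fun x hx ↦ hM x (Ioo_subset_Icc_self hx))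

theorem TendstoLebesgueLocally.tendsto_setIntegral (h : TendstoLebesgueLocally ν l) (hR : 0 < R)
    {F : ι → ℝ → ℝ} {f : ℝ → ℝ} (hF : ∀ i, Continuous (F i)) (hf : Continuous f)
    (hFf : TendstoUniformlyOn F f l (Icc (-R) R)) :
    Tendsto (fun i ↦ ∫ x in Ioo (-R) R, F i x ∂ν i) l (𝓝 (∫ x in (-R)..R, f x)) := by
  have hmass := h.tendsto_measureReal hR
  refine tendsto_of_tendsto_of_dist (h R hR f hf) (Metric.tendsto_nhds.2 fun ε hε ↦ ?_)
  filter_upwards [hmass.eventually_lt_const (show 2 * R < 2 * R + 1 by linarith),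
    hmass.eventually_const_lt (show (0 : ℝ) < 2 * R by linarith),
    Metric.tendstoUniformlyOn_iff.1 hFf (ε / (2 * R + 1)) (by positivity)] with i hi hi0 hdist
  have hfin : ν i (Ioo (-R) R) ≠ ⊤ := fun htop ↦ by simp [measureReal_def, htop] at hi0
  rw [Real.dist_0_eq_abs, abs_of_nonneg dist_nonneg, dist_eq_norm, ← integral_sub
    (integrableOn_Ioo_of_continuous hf hfin) (integrableOn_Ioo_of_continuous (hF i) hfin)]
  calc ‖∫ x in Ioo (-R) R, f x - F i x ∂ν i‖
      ≤ ε / (2 * R + 1) * (ν i).real (Ioo (-R) R) :=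
        norm_setIntegral_le_of_norm_le_const hfin.lt_top fun x hx ↦
          dist_eq_norm (f x) (F i x) ▸ (hdist x (Ioo_subset_Icc_self hx)).le
    _ < ε / (2 * R + 1) * (2 * R + 1) := by gcongr
    _ = ε := div_mul_cancel₀ ε (by positivity)

/-- `x₀` is a Lebesgue point of `μ` in the strong sense: the density of `μ` is positive there and
the singular part of `μ` is negligible in its neighborhood. -/
structure IsLebesguePoint (μ : Measure ℝ) (x₀ : ℝ) : Prop where
  rnDeriv_pos : 0 < (μ.rnDeriv volume x₀).toReal
  tendsto_average_abs_sub : Tendsto (fun δ : ℝ ↦ (2 * δ)⁻¹ * ∫ x in Ioo (x₀ - δ) (x₀ + δ),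
    |(μ.rnDeriv volume x).toReal - (μ.rnDeriv volume x₀).toReal|) (𝓝[>] 0) (𝓝 0)
  tendsto_average_singularPart : Tendsto (fun δ : ℝ ↦ (2 * δ)⁻¹ *
    (μ.singularPart volume (Ioo (x₀ - δ) (x₀ + δ))).toReal) (𝓝[>] 0) (𝓝 0)

theorem setIntegral_eq_singularPart_add_rnDeriv [SigmaFinite μ] {s : Set ℝ}
    (hs : MeasurableSet s) {f : ℝ → ℝ} (hf : IntegrableOn f s μ) :
    ∫ x in s, f x ∂μ =
      ∫ x in s, f x ∂μ.singularPart volume + ∫ x in s, (μ.rnDeriv volume x).toReal * f x := by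
  have hle : volume.withDensity (μ.rnDeriv volume) ≤ μ := Measure.withDensity_rnDeriv_le μ volume
  conv_lhs => rw [μ.haveLebesgueDecomposition_add volume, Measure.restrict_add]
  rw [integral_add_measure (hf.mono_measure (Measure.singularPart_le μ volume))
    (hf.mono_measure hle), setIntegral_withDensity_eq_setIntegral_toReal_smul
    (μ.measurable_rnDeriv volume) (ae_restrict_of_ae (μ.rnDeriv_lt_top volume)) f hs]
  simp only [smul_eq_mul]

theorem abs_setIntegral_sub_rnDeriv_mul_setIntegral_le [SigmaFinite μ] {s : Set ℝ}
    (hs : MeasurableSet s) (hμ : μ s ≠ ⊤) (hvol : volume s ≠ ⊤) {f : ℝ → ℝ} (hf : Measurable f)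
    {M : ℝ} (hM : ∀ x ∈ s, ‖f x‖ ≤ M) (c : ℝ) :
    |∫ x in s, f x ∂μ - c * ∫ x in s, f x| ≤
      M * ((μ.singularPart volume s).toReal + ∫ x in s, |(μ.rnDeriv volume x).toReal - c|) := by
  have hfM (ν : Measure ℝ) : ∀ᵐ x ∂ν.restrict s, ‖f x‖ ≤ M := ae_restrict_of_forall_mem hs hM
  have hint (ν : Measure ℝ) (hν : ν s ≠ ⊤) : IntegrableOn f s ν :=
    .of_bound hν.lt_top hf.aestronglyMeasurable M (hfM ν)
  have hw : IntegrableOn (fun x ↦ (μ.rnDeriv volume x).toReal) s :=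
    Measure.integrableOn_toReal_rnDeriv hμ
  have hwc : IntegrableOn (fun x ↦ (μ.rnDeriv volume x).toReal - c) s :=
    hw.sub (integrableOn_const hvol)
  have hdiff : (∫ x in s, (μ.rnDeriv volume x).toReal * f x) - c * ∫ x in s, f x =
      ∫ x in s, ((μ.rnDeriv volume x).toReal - c) * f x := by
    rw [← integral_const_mul, ← integral_sub
      (hw.mul_bdd hf.aestronglyMeasurable (hfM _)) ((hint _ hvol).const_mul c)]
    simp only [sub_mul]
  have hsing : |∫ x in s, f x ∂μ.singularPart volume| ≤ M * (μ.singularPart volume s).toReal :=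
    norm_setIntegral_le_of_norm_le_const
      ((Measure.singularPart_le μ volume s).trans_lt hμ.lt_top) hM
  have hac : |∫ x in s, ((μ.rnDeriv volume x).toReal - c) * f x| ≤
      M * ∫ x in s, |(μ.rnDeriv volume x).toReal - c| := by
    rw [← integral_const_mul, ← Real.norm_eq_abs]
    refine norm_integral_le_of_norm_le (hwc.abs.const_mul M) ((hfM volume).mono fun x hx ↦ ?_)
    rw [norm_mul, mul_comm]
    exact mul_le_mul_of_nonneg_right hx (abs_nonneg _)
  rw [setIntegral_eq_singularPart_add_rnDeriv hs (hint μ hμ), add_sub_assoc, hdiff, mul_add]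
  exact (abs_add_le _ _).trans (add_le_add hsing hac)

/-- The measure `μ` seen from `x₀` through a microscope of power `τ`, with total mass multiplied
by `t`. -/
noncomputable def blowUp (μ : Measure ℝ) (x₀ t τ : ℝ) : Measure ℝ :=
  ENNReal.ofReal t • μ.map fun s ↦ τ * (s - x₀)

variable {t τ : ℝ} {f : ℝ → ℝ}

theorem integral_blowUp (ht : 0 ≤ t) (hf : Continuous f) :
    ∫ x, f x ∂blowUp μ x₀ t τ = t * ∫ s, f (τ * (s - x₀)) ∂μ := by
  rw [blowUp, integral_smul_measure, integral_map (by fun_prop) hf.aestronglyMeasurable,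
    ENNReal.toReal_ofReal ht, smul_eq_mul]

theorem setIntegral_Ioo_blowUp (ht : 0 ≤ t) (hτ : 0 < τ) (hf : Continuous f) :
    ∫ x in Ioo (-R) R, f x ∂blowUp μ x₀ t τ =
      t * ∫ s in Ioo (x₀ - R / τ) (x₀ + R / τ), f (τ * (s - x₀)) ∂μ := by
  have hpre : (fun s ↦ τ * (s - x₀)) ⁻¹' Ioo (-R) R = Ioo (x₀ - R / τ) (x₀ + R / τ) := by
    ext s
    have hR : τ * (R / τ) = R := mul_div_cancel₀ R hτ.ne'
    simp only [mem_preimage, mem_Ioo]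
    constructor <;> rintro ⟨h1, h2⟩ <;> constructor <;> nlinarith
  rw [blowUp, Measure.restrict_smul, integral_smul_measure, setIntegral_map measurableSet_Ioo
    hf.aestronglyMeasurable (by fun_prop), hpre, ENNReal.toReal_ofReal ht, smul_eq_mul]

theorem setIntegral_Ioo_comp_mul_sub (hR : 0 ≤ R) (hτ : 0 < τ) (f : ℝ → ℝ) :
    ∫ s in Ioo (x₀ - R / τ) (x₀ + R / τ), f (τ * (s - x₀)) = τ⁻¹ * ∫ x in (-R)..R, f x := by
  have hle : x₀ - R / τ ≤ x₀ + R / τ := by linarith [div_nonneg hR hτ.le]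
  rw [← integral_Ioc_eq_integral_Ioo, ← intervalIntegral.integral_of_le hle]
  simp only [mul_sub]
  rw [intervalIntegral.integral_comp_mul_sub f hτ.ne' (τ * x₀), smul_eq_mul]
  congr 2 <;> field_simp <;> ring

theorem IsLebesguePoint.tendstoLebesgueLocally_blowUp [IsLocallyFiniteMeasure μ]
    (h : IsLebesguePoint μ x₀) {t τ : ι → ℝ} (hτ : Tendsto τ l atTop)
    (ht : ∀ᶠ i in l, τ i = (μ.rnDeriv volume x₀).toReal * t i) :
    TendstoLebesgueLocally (fun i ↦ blowUp μ x₀ (t i) (τ i)) l := by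
  intro R hR f hf
  obtain ⟨M, hM⟩ := isCompact_Icc.exists_bound_of_continuousOn (s := Icc (-R) R) hf.continuousOn
  set c := (μ.rnDeriv volume x₀).toReal with hc
  have hδ : Tendsto (fun i ↦ R / τ i) l (𝓝[>] 0) :=
    tendsto_nhdsWithin_iff.2 ⟨hτ.const_div_atTop R,
      (hτ.eventually_gt_atTop 0).mono fun i hi ↦ div_pos hR hi⟩
  have herr := (((h.tendsto_average_singularPart.comp hδ).add
    (h.tendsto_average_abs_sub.comp hδ)).const_mul (2 * R * M / c))
  rw [add_zero, mul_zero] at herr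
  refine tendsto_iff_dist_tendsto_zero.2 (squeeze_zero' (.of_forall fun _ ↦ dist_nonneg) ?_ herr)
  filter_upwards [hτ.eventually_gt_atTop 0, ht] with i hτi hti
  have hcpos : 0 < c := h.rnDeriv_pos
  have htpos : 0 < t i := by
    rw [hti] at hτi
    exact pos_of_mul_pos_right hτi hcpos.le
  have hMi : ∀ s ∈ Ioo (x₀ - R / τ i) (x₀ + R / τ i), ‖f (τ i * (s - x₀))‖ ≤ M := fun s hs ↦ by
    have hRτ : τ i * (R / τ i) = R := mul_div_cancel₀ R hτi.ne'
    exact hM _ ⟨by nlinarith [hs.1], by nlinarith [hs.2]⟩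
  have hbound := abs_setIntegral_sub_rnDeriv_mul_setIntegral_le measurableSet_Ioo
    (measure_Ioo_lt_top (μ := μ)).ne (by simp) (by fun_prop) hMi c
  rw [setIntegral_Ioo_comp_mul_sub hR.le hτi] at hbound
  rw [setIntegral_Ioo_blowUp htpos.le hτi hf, Real.dist_eq]
  have hfactor (a b : ℝ) : t i * a - b = t i * (a - c * ((τ i)⁻¹ * b)) := by
    rw [hti]
    field_simp
  rw [hfactor, abs_mul, abs_of_pos htpos]
  refine (mul_le_mul_of_nonneg_left hbound htpos.le).trans_eq ?_
  simp only [Function.comp_def, ← hc, hti]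
  field_simp

end LebesguePoint

section Rescaling

variable {μ : Measure ℝ} {p : ℕ → ℝ[X]} {x₀ t τ : ℝ}

/-- The polynomials `p j` seen from `x₀` through a microscope of power `τ`, divided by `√t`. -/
noncomputable def rescaledPolynomial (p : ℕ → ℝ[X]) (x₀ t τ : ℝ) (j : ℕ) : ℝ[X] :=
  .C (√t)⁻¹ * (p j).comp (.C τ⁻¹ * .X + .C x₀)

theorem eval_rescaledPolynomial (j : ℕ) (x : ℝ) :
    (rescaledPolynomial p x₀ t τ j).eval x = (√t)⁻¹ * (p j).eval (x₀ + x / τ) := by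
  simp [rescaledPolynomial, Polynomial.eval_comp, add_comm x₀, div_eq_inv_mul]

theorem aeval_rescaledPolynomial (j : ℕ) (z : ℂ) :
    Polynomial.aeval z (rescaledPolynomial p x₀ t τ j) =
      ((√t)⁻¹ : ℝ) * Polynomial.aeval (x₀ + z / τ) (p j) := by
  simp [rescaledPolynomial, Polynomial.aeval_comp, add_comm (x₀ : ℂ), div_eq_inv_mul]

theorem IsOrthonormalPolynomials.rescale (h : IsOrthonormalPolynomials μ p)
    (ht : 0 < t) (hτ : τ ≠ 0) :
    IsOrthonormalPolynomials (blowUp μ x₀ t τ) (rescaledPolynomial p x₀ t τ) where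
  natDegree_eq n := by
    rw [rescaledPolynomial, Polynomial.natDegree_C_mul (by positivity),
      Polynomial.natDegree_comp, Polynomial.natDegree_linear (inv_ne_zero hτ), mul_one,
      h.natDegree_eq]
  integral_mul m n := by
    have hpt (s : ℝ) : (rescaledPolynomial p x₀ t τ m).eval (τ * (s - x₀)) *
        (rescaledPolynomial p x₀ t τ n).eval (τ * (s - x₀)) =
        t⁻¹ * ((p m).eval s * (p n).eval s) := by
      rw [eval_rescaledPolynomial, eval_rescaledPolynomial, mul_div_cancel_left₀ _ hτ,
        add_sub_cancel, mul_mul_mul_comm, ← mul_inv, Real.mul_self_sqrt ht.le]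
    rw [integral_blowUp ht.le (by fun_prop)]
    simp only [hpt]
    rw [integral_const_mul, h.integral_mul, mul_inv_cancel_left₀ ht.ne']

theorem CDKernel_rescaledPolynomial (ht : 0 ≤ t) (n : ℕ) (x y : ℝ) :
    CDKernel (rescaledPolynomial p x₀ t τ) n x y =
      CDKernel p n (x₀ + x / τ) (x₀ + y / τ) / t := by
  simp only [CDKernel, eval_rescaledPolynomial, Finset.sum_div]
  refine Finset.sum_congr rfl fun j _ ↦ ?_
  rw [mul_mul_mul_comm, ← mul_inv, Real.mul_self_sqrt ht, inv_mul_eq_div]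

theorem cdDiag_rescaledPolynomial (ht : 0 ≤ t) (n : ℕ) (z : ℂ) :
    cdDiag (rescaledPolynomial p x₀ t τ) n z = cdDiag p n (x₀ + z / τ) / t := by
  simp only [cdDiag, aeval_rescaledPolynomial, Finset.sum_div]
  refine Finset.sum_congr rfl fun j _ ↦ ?_
  rw [norm_mul, mul_pow, Complex.norm_real, Real.norm_eq_abs, sq_abs, inv_pow, Real.sq_sqrt ht,
    inv_mul_eq_div]

end Rescaling

section SincIntegrals

variable {κ T : ℝ}

theorem tendsto_intervalIntegral_sinc_mul_sq (hκ : 0 < κ) :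
    Tendsto (fun R : ℝ ↦ ∫ x in (-R)..R, Real.sinc (κ * x) ^ 2) atTop (𝓝 (Real.pi / κ)) := by
  have hscale (R : ℝ) : ∫ x in (-R)..R, Real.sinc (κ * x) ^ 2 =
      (∫ x in (-(κ * R))..(κ * R), Real.sinc x ^ 2) / κ := by
    rw [intervalIntegral.integral_comp_mul_left (fun x ↦ Real.sinc x ^ 2) hκ.ne', smul_eq_mul,
      mul_neg, inv_mul_eq_div]
  simp only [hscale]
  exact (tendsto_intervalIntegral_sinc_sq.comp (tendsto_id.const_mul_atTop hκ)).div_const κ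

theorem abs_intervalIntegral_le_div {g : ℝ → ℝ} {C a b r : ℝ} (hr : 0 < r) (hab : a ≤ b)
    (hr_le : ∀ x ∈ Ioc a b, r ≤ |x|) (hC : ∀ x, |x| * |g x| ≤ C) :
    |∫ x in a..b, g x| ≤ C / r * (b - a) := by
  have hbound : ∀ x ∈ uIoc a b, ‖g x‖ ≤ C / r := fun x hx ↦ by
    rw [uIoc_of_le hab] at hx
    rw [Real.norm_eq_abs, le_div_iff₀ hr, mul_comm]
    exact (mul_le_mul_of_nonneg_right (hr_le x hx) (abs_nonneg _)).trans (hC x)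
  simpa [abs_of_nonneg (sub_nonneg.2 hab)] using
    intervalIntegral.norm_integral_le_of_norm_le_const hbound

theorem tendsto_intervalIntegral_comp_sub_sub {g : ℝ → ℝ} (hg : Continuous g) {C : ℝ}
    (hC : ∀ x, |x| * |g x| ≤ C) (hT : 0 ≤ T) :
    Tendsto (fun R : ℝ ↦ ∫ x in (-R)..R, (g (x - T) - g x)) atTop (𝓝 0) := by
  have hlim : Tendsto (fun R : ℝ ↦ 2 * (C / (R - T) * T)) atTop (𝓝 0) := by
    have hshift := tendsto_atTop_add_const_right atTop (-T) tendsto_id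
    simpa [sub_eq_add_neg] using ((hshift.const_div_atTop C).mul_const T).const_mul 2
  refine squeeze_zero_norm' ?_ hlim
  filter_upwards [eventually_gt_atTop T] with R hR
  have hint (a b : ℝ) : IntervalIntegrable g volume a b := hg.intervalIntegrable a b
  have hleft : |∫ x in (-R - T)..(-R), g x| ≤ C / (R - T) * (-R - (-R - T)) :=
    abs_intervalIntegral_le_div (sub_pos.2 hR) (by linarith)
      (fun x hx ↦ le_abs.2 (.inr (by linarith [hx.2]))) hC
  have hright : |∫ x in (R - T)..R, g x| ≤ C / (R - T) * (R - (R - T)) :=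
    abs_intervalIntegral_le_div (sub_pos.2 hR) (by linarith)
      (fun x hx ↦ le_abs.2 (.inl hx.1.le)) hC
  have hint' : IntervalIntegrable (fun x ↦ g (x - T)) volume (-R) R :=
    (hg.comp (continuous_sub_right T)).intervalIntegrable _ _
  rw [intervalIntegral.integral_sub hint' (hint _ _), intervalIntegral.integral_comp_sub_right,
    intervalIntegral.integral_interval_sub_interval_comm (hint _ _) (hint _ _) (hint _ _)]
  rw [sub_sub_cancel] at hleft hright
  exact (abs_sub _ _).trans (by linarith)

theorem abs_mul_abs_mul_sinc_mul_sq_le (hκ : κ ≠ 0) (x : ℝ) :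
    |x| * |x * Real.sinc (κ * x) ^ 2| ≤ (κ ^ 2)⁻¹ := by
  have hsin : x * (x * Real.sinc (κ * x) ^ 2) = (κ ^ 2)⁻¹ * Real.sin (κ * x) ^ 2 := by
    rw [← mul_sinc]
    field_simp
  rw [← abs_mul, hsin, abs_of_nonneg (by positivity)]
  exact mul_le_of_le_one_right (by positivity) (Real.sin_sq_le_one _)

theorem mul_sinc_mul_sinc_sub (hκ : κ ≠ 0) (hT : κ * T = 2 * Real.pi) (x : ℝ) :
    T * (Real.sinc (κ * x) * Real.sinc (κ * (x - T))) =
      (x - T) * Real.sinc (κ * (x - T)) ^ 2 - x * Real.sinc (κ * x) ^ 2 := by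
  have hzero : x * Real.sinc (κ * x) = (x - T) * Real.sinc (κ * (x - T)) := by
    refine mul_left_cancel₀ hκ ?_
    rw [← mul_assoc, ← mul_assoc, mul_sinc, mul_sinc, mul_sub, hT, Real.sin_sub_two_pi]
  linear_combination (Real.sinc (κ * (x - T)) + Real.sinc (κ * x)) * hzero

theorem tendsto_intervalIntegral_sinc_mul_sinc_sub (hκ : 0 < κ) (hT : κ * T = 2 * Real.pi) :
    Tendsto (fun R : ℝ ↦ ∫ x in (-R)..R, Real.sinc (κ * x) * Real.sinc (κ * (x - T))) atTop
      (𝓝 0) := by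
  have hTpos : 0 < T := pos_of_mul_pos_right (hT ▸ Real.two_pi_pos) hκ.le
  have hcont : Continuous fun x ↦ x * Real.sinc (κ * x) ^ 2 :=
    continuous_id.mul ((Real.continuous_sinc.comp (continuous_const_mul κ)).pow 2)
  have hshift := (tendsto_intervalIntegral_comp_sub_sub hcont
    (abs_mul_abs_mul_sinc_mul_sq_le hκ.ne') hTpos.le).const_mul T⁻¹
  simpa only [← mul_sinc_mul_sinc_sub hκ.ne' hT, intervalIntegral.integral_const_mul,
    inv_mul_cancel_left₀ hTpos.ne', mul_zero] using hshift

theorem sinc_mul_neg (hT : κ * T = 2 * Real.pi) (hκ : 0 < κ) {x : ℝ} (hx : T / 2 < x)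
    (hxT : x < T) : Real.sinc (κ * x) < 0 := by
  have hlow : -Real.pi < κ * x - 2 * Real.pi := by nlinarith
  have hupp : κ * x - 2 * Real.pi < 0 := by nlinarith
  rw [Real.sinc_of_ne_zero (by nlinarith [Real.pi_pos]), ← Real.sin_sub_two_pi]
  exact div_neg_of_neg_of_pos (Real.sin_neg_of_neg_of_neg_pi_lt hupp hlow)
    (by linarith [Real.pi_pos])

theorem sinc_mul_pos (hT : κ * T = 2 * Real.pi) (hκ : 0 < κ) {x : ℝ} (hTx : T < x)
    (hx : x < 3 / 2 * T) : 0 < Real.sinc (κ * x) := by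
  have hlow : 0 < κ * x - 2 * Real.pi := by nlinarith
  have hupp : κ * x - 2 * Real.pi < Real.pi := by nlinarith
  rw [Real.sinc_of_ne_zero (by nlinarith [Real.pi_pos]), ← Real.sin_sub_two_pi]
  exact div_pos (Real.sin_pos_of_pos_of_lt_pi hlow hupp) (by linarith [Real.pi_pos])

end SincIntegrals

section Scale

variable {ι : Type*} {l : Filter ι} {μ : Measure ℝ} {p : ℕ → ℝ[X]} {n : ℕ}
  {ν : ι → Measure ℝ} {q : ι → ℕ → ℝ[X]} {N : ι → ℕ} {κ R t T y₀ : ℝ}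

theorem exists_tendsto_of_sign_change {F : ι → ℝ → ℝ} {f : ℝ → ℝ} (hF : ∀ i, Continuous (F i))
    (hlim : ∀ x, Tendsto (fun i ↦ F i x) l (𝓝 (f x))) {a : ℝ} (hneg : ∀ᶠ x in 𝓝[<] a, f x < 0)
    (hpos : ∀ᶠ x in 𝓝[>] a, 0 < f x) :
    ∃ t : ι → ℝ, Tendsto t l (𝓝 a) ∧ ∀ᶠ i in l, F i (t i) = 0 := by
  have hnear (ε : ℝ) (hε : 0 < ε) : ∀ᶠ i in l, ∃ x, F i x = 0 ∧ dist x a < ε := by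
    obtain ⟨b, hb, hba⟩ := (hneg.and (Ioo_mem_nhdsLT (sub_lt_self a hε))).exists
    obtain ⟨c, hc, hac⟩ := (hpos.and (Ioo_mem_nhdsGT (lt_add_of_pos_right a hε))).exists
    filter_upwards [(hlim b).eventually_lt_const hb, (hlim c).eventually_const_lt hc] with i hib hic
    obtain ⟨x, hx, hx0⟩ := intermediate_value_Icc (hba.2.trans hac.1).le (hF i).continuousOn
      ⟨hib.le, hic.le⟩
    exact ⟨x, hx0, abs_sub_lt_iff.2 ⟨by linarith [hx.2, hac.2], by linarith [hx.1, hba.1]⟩⟩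
  -- Among the zeros of `F i` choose one closest to `a`.
  have hclosest (i : ι) :
      ∃ t, (∃ x, F i x = 0) → F i t = 0 ∧ ∀ x, F i x = 0 → dist t a ≤ dist x a := by
    by_cases hne : ∃ x, F i x = 0
    · obtain ⟨t, ht, hdist⟩ := (isClosed_eq (hF i) continuous_const).exists_infDist_eq_dist hne a
      refine ⟨t, fun _ ↦ ⟨ht, fun x hx ↦ ?_⟩⟩
      rw [dist_comm t, ← hdist, dist_comm x]
      exact Metric.infDist_le_dist_of_mem hx
    · exact ⟨0, fun h ↦ (hne h).elim⟩
  choose t ht using hclosest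
  refine ⟨t, Metric.tendsto_nhds.2 fun ε hε ↦ ?_, ?_⟩
  · filter_upwards [hnear ε hε] with i ⟨x, hx, hxa⟩
    exact ((ht i ⟨x, hx⟩).2 x hx).trans_lt hxa
  · filter_upwards [hnear 1 one_pos] with i ⟨x, hx, _⟩
    exact (ht i ⟨x, hx⟩).1

theorem continuous_CDKernel_right (p : ℕ → ℝ[X]) (n : ℕ) (x : ℝ) : Continuous (CDKernel p n x) :=
  continuous_finsetSum _ fun j _ ↦ (p j).continuous.const_mul _

theorem IsOrthonormalPolynomials.sub_mul_CDKernel_mul (h : IsOrthonormalPolynomials μ p)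
    (ht : CDKernel p n 0 t = 0) (y y₀ : ℝ) :
    ((y - t) * CDKernel p n t y) * (y₀ * CDKernel p n 0 y₀) =
      ((y₀ - t) * CDKernel p n t y₀) * (y * CDKernel p n 0 y) := by
  have hC (x : ℝ) : (CDKernel p n 0 0 : ℂ) * ((x - t) * CDKernel p n t x) =
      (x * CDKernel p n 0 x) * cdCompanion p n t := by
    have := h.complexCDKernel_zero_zero_mul n t x
    simp only [← Complex.ofReal_zero, complexCDKernel_ofReal, ht] at this
    simpa only [Complex.ofReal_zero, mul_zero, zero_mul, sub_zero] using this
  have h00 : (CDKernel p n 0 0 : ℂ) ≠ 0 := by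
    have := h.cdDiag_pos n (0 : ℝ)
    rw [cdDiag_ofReal] at this
    exact_mod_cast this.ne'
  refine Complex.ofReal_injective (mul_left_cancel₀ h00 ?_)
  push_cast
  linear_combination (y₀ * CDKernel p n 0 y₀ : ℂ) * hC y - (y * CDKernel p n 0 y : ℂ) * hC y₀

-- Outside the window `y / (y - t) ≥ 1 / 2`, so `K(0, y) ^ 2` is dominated by `K(0, y) * K(t, y)`,
-- whose total integral `K(0, t)` vanishes.
theorem IsOrthonormalPolynomials.CDKernel_zero_zero_le (h : IsOrthonormalPolynomials μ p)
    (ht : CDKernel p n 0 t = 0) (htR : |t| < R) (hy₀ : 0 < y₀ * CDKernel p n 0 y₀)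
    (hle : y₀ * CDKernel p n 0 y₀ ≤ 2 * ((y₀ - t) * CDKernel p n t y₀)) :
    CDKernel p n 0 0 ≤ ∫ y in Ioo (-R) R, CDKernel p n 0 y * CDKernel p n 0 y ∂μ -
      4 * ∫ y in Ioo (-R) R, CDKernel p n 0 y * CDKernel p n t y ∂μ := by
  have hI : MeasurableSet (Ioo (-R) R) := measurableSet_Ioo
  have hint (x : ℝ) := h.integrable_CDKernel_mul_CDKernel n 0 x
  have hdom : ∀ y ∈ (Ioo (-R) R)ᶜ,
      CDKernel p n 0 y * CDKernel p n 0 y ≤ 4 * (CDKernel p n 0 y * CDKernel p n t y) := by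
    intro y hy
    have hty : |y| * |t| < y ^ 2 := by
      have hRy : R ≤ |y| := le_of_not_gt fun hlt ↦ hy (abs_lt.1 hlt)
      rw [← sq_abs]
      nlinarith [abs_nonneg t]
    rw [← abs_mul, abs_lt] at hty
    have hpos : 0 < (y₀ * CDKernel p n 0 y₀) * (y * (y - t)) := mul_pos hy₀ (by linarith)
    have hcross := h.sub_mul_CDKernel_mul ht y y₀
    refine le_of_mul_le_mul_left ?_ hpos
    have hdouble : y * (y - t) ≤ 2 * y ^ 2 := by linarith
    calc _ ≤ (y₀ * CDKernel p n 0 y₀) * (2 * y ^ 2) * (CDKernel p n 0 y * CDKernel p n 0 y) := by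
          gcongr
          exact mul_self_nonneg _
      _ ≤ 2 * ((y₀ - t) * CDKernel p n t y₀) * (2 * y ^ 2) *
            (CDKernel p n 0 y * CDKernel p n 0 y) := by
          gcongr
          exact mul_self_nonneg _
      _ = _ := by linear_combination (-4 * y * CDKernel p n 0 y) * hcross
  have htail := setIntegral_mono_on (hint 0).integrableOn ((hint t).integrableOn.const_mul 4)
    hI.compl hdom
  rw [integral_const_mul] at htail
  have h0 := integral_add_compl hI (hint 0)
  have h1 := integral_add_compl hI (hint t)
  rw [h.integral_CDKernel_mul_CDKernel] at h0 h1
  linarith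

theorem TendstoLebesgueLocally.tendsto_setIntegral_CDKernel_mul (hν : TendstoLebesgueLocally ν l)
    {k : ℝ × ℝ → ℝ} (hk : Continuous k)
    (hK : TendstoContinuously (fun i (x : ℝ × ℝ) ↦ CDKernel (q i) (N i) x.1 x.2) k l) (hR : 0 < R)
    {u v : ι → ℝ} {a b : ℝ} (hu : Tendsto u l (𝓝 a)) (hv : Tendsto v l (𝓝 b)) :
    Tendsto (fun i ↦ ∫ y in Ioo (-R) R, CDKernel (q i) (N i) (u i) y * CDKernel (q i) (N i) (v i) y
      ∂ν i) l (𝓝 (∫ y in (-R)..R, k (a, y) * k (b, y))) := by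
  have hslice {u : ι → ℝ} {a : ℝ} (hu : Tendsto u l (𝓝 a)) (y : ℝ) :
      Tendsto (fun x : ι × ℝ ↦ CDKernel (q x.1) (N x.1) (u x.1) x.2) (l ×ˢ 𝓝 y) (𝓝 (k (a, y))) :=
    (hK (a, y)).comp (tendsto_fst.prodMk ((hu.comp tendsto_fst).prodMk_nhds tendsto_snd))
  have hprod : TendstoContinuously
      (fun i y ↦ CDKernel (q i) (N i) (u i) y * CDKernel (q i) (N i) (v i) y)
      (fun y ↦ k (a, y) * k (b, y)) l := fun y ↦ (hslice hu y).mul (hslice hv y)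
  have hcont : Continuous fun y ↦ k (a, y) * k (b, y) := by fun_prop
  exact hν.tendsto_setIntegral hR
    (fun i ↦ (continuous_CDKernel_right _ _ _).mul (continuous_CDKernel_right _ _ _)) hcont
    ((tendstoLocallyUniformlyOn_iff_tendstoUniformlyOn_of_compact isCompact_Icc).1
      (hprod.tendstoLocallyUniformly hcont).tendstoLocallyUniformlyOn)

/-- The hypotheses under which the scale `κ` of a sine kernel limit is determined: kernels that are
`1` at the origin and reproduce for measures tending to Lebesgue measure. -/
structure IsSincKernelLimit (ν : ι → Measure ℝ) (q : ι → ℕ → ℝ[X]) (N : ι → ℕ) (l : Filter ι)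
    (κ : ℝ) : Prop where
  orthonormal : ∀ i, IsOrthonormalPolynomials (ν i) (q i)
  kernel_zero_zero : ∀ i, CDKernel (q i) (N i) 0 0 = 1
  tendsto_measure : TendstoLebesgueLocally ν l
  tendsto_kernel : TendstoContinuously (fun i (x : ℝ × ℝ) ↦ CDKernel (q i) (N i) x.1 x.2)
    (fun x ↦ Real.sinc (κ * (x.2 - x.1))) l

namespace IsSincKernelLimit

theorem tendsto_setIntegral (h : IsSincKernelLimit ν q N l κ) (hR : 0 < R) {t : ι → ℝ}
    (ht : Tendsto t l (𝓝 T)) :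
    Tendsto (fun i ↦ ∫ y in Ioo (-R) R, CDKernel (q i) (N i) 0 y * CDKernel (q i) (N i) (t i) y
      ∂ν i) l (𝓝 (∫ y in (-R)..R, Real.sinc (κ * y) * Real.sinc (κ * (y - T)))) := by
  simpa only [Function.comp_apply, sub_zero] using
    h.tendsto_measure.tendsto_setIntegral_CDKernel_mul (Real.continuous_sinc.comp (by fun_prop))
      h.tendsto_kernel hR (tendsto_const_nhds (x := 0)) ht

theorem tendsto_setIntegral_mul_self (h : IsSincKernelLimit ν q N l κ) (hR : 0 < R) :
    Tendsto (fun i ↦ ∫ y in Ioo (-R) R, CDKernel (q i) (N i) 0 y * CDKernel (q i) (N i) 0 y ∂ν i)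
      l (𝓝 (∫ y in (-R)..R, Real.sinc (κ * y) ^ 2)) := by
  simpa only [sub_zero, ← pow_two] using h.tendsto_setIntegral hR (tendsto_const_nhds (x := 0))

theorem tendsto_apply (h : IsSincKernelLimit ν q N l κ) {t : ι → ℝ} (ht : Tendsto t l (𝓝 T))
    (y : ℝ) :
    Tendsto (fun i ↦ CDKernel (q i) (N i) (t i) y) l (𝓝 (Real.sinc (κ * (y - T)))) :=
  h.tendsto_kernel.tendsto_comp (ht.prodMk_nhds tendsto_const_nhds)

theorem intervalIntegral_sinc_sq_le_one [l.NeBot] (h : IsSincKernelLimit ν q N l κ) (hR : 0 < R) :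
    ∫ y in (-R)..R, Real.sinc (κ * y) ^ 2 ≤ 1 := by
  refine le_of_tendsto (h.tendsto_setIntegral_mul_self hR) (.of_forall fun i ↦ ?_)
  calc ∫ y in Ioo (-R) R, CDKernel (q i) (N i) 0 y * CDKernel (q i) (N i) 0 y ∂ν i
      ≤ ∫ y, CDKernel (q i) (N i) 0 y * CDKernel (q i) (N i) 0 y ∂ν i :=
        setIntegral_le_integral ((h.orthonormal i).integrable_CDKernel_mul_CDKernel _ _ _)
          (.of_forall fun _ ↦ mul_self_nonneg _)
    _ = 1 := by rw [(h.orthonormal i).integral_CDKernel_mul_CDKernel, h.kernel_zero_zero]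

theorem pi_le [l.NeBot] (h : IsSincKernelLimit ν q N l κ) (hκ : 0 < κ) : Real.pi ≤ κ :=
  (div_le_one hκ).1 (le_of_tendsto (tendsto_intervalIntegral_sinc_mul_sq hκ)
    ((eventually_gt_atTop 0).mono fun _ ↦ h.intervalIntegral_sinc_sq_le_one))

theorem ne_zero [l.NeBot] (h : IsSincKernelLimit ν q N l κ) : κ ≠ 0 := by
  rintro rfl
  have := h.intervalIntegral_sinc_sq_le_one one_pos
  norm_num at this

theorem exists_tendsto_zero (h : IsSincKernelLimit ν q N l κ) (hκ : 0 < κ)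
    (hT : κ * T = 2 * Real.pi) :
    ∃ t : ι → ℝ, Tendsto t l (𝓝 T) ∧ ∀ᶠ i in l, CDKernel (q i) (N i) 0 (t i) = 0 := by
  have hTpos : 0 < T := pos_of_mul_pos_right (hT ▸ Real.two_pi_pos) hκ.le
  refine exists_tendsto_of_sign_change (f := fun x ↦ Real.sinc (κ * x))
    (fun i ↦ continuous_CDKernel_right _ _ _)
    (fun x ↦ by simpa only [sub_zero] using h.tendsto_apply (tendsto_const_nhds (x := 0)) x) ?_ ?_
  · filter_upwards [Ioo_mem_nhdsLT (half_lt_self hTpos)] with x hx using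
      sinc_mul_neg hT hκ hx.1 hx.2
  · filter_upwards [Ioo_mem_nhdsGT (show T < 3 / 2 * T by linarith)] with x hx using
      sinc_mul_pos hT hκ hx.1 hx.2

theorem one_le [l.NeBot] (h : IsSincKernelLimit ν q N l κ) (hκ : 0 < κ)
    (hT : κ * T = 2 * Real.pi) (hTR : T < R) :
    1 ≤ (∫ y in (-R)..R, Real.sinc (κ * y) ^ 2) -
      4 * ∫ y in (-R)..R, Real.sinc (κ * y) * Real.sinc (κ * (y - T)) := by
  have hTpos : 0 < T := pos_of_mul_pos_right (hT ▸ Real.two_pi_pos) hκ.le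
  have hR : 0 < R := hTpos.trans hTR
  obtain ⟨t, ht, hzero⟩ := h.exists_tendsto_zero hκ hT
  have hT4 : κ * (T / 4) = Real.pi / 2 := by linarith
  have hval : κ * (T / 4 * Real.sinc (κ * (T / 4))) = 1 := by
    rw [← mul_assoc, mul_sinc, hT4, Real.sin_pi_div_two]
  have hval' : κ * ((T / 4 - T) * Real.sinc (κ * (T / 4 - T))) = 1 := by
    rw [← mul_assoc, mul_sinc, mul_sub, hT, hT4, Real.sin_sub_two_pi, Real.sin_pi_div_two]
  have h0 : Tendsto (fun i ↦ κ * (T / 4 * CDKernel (q i) (N i) 0 (T / 4))) l (𝓝 1) := by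
    simpa only [sub_zero, hval] using
      ((h.tendsto_apply (tendsto_const_nhds (x := 0)) (T / 4)).const_mul (T / 4)).const_mul κ
  have h1 : Tendsto (fun i ↦ κ * ((T / 4 - t i) * CDKernel (q i) (N i) (t i) (T / 4))) l
      (𝓝 1) := by
    simpa only [hval'] using ((ht.const_sub (T / 4)).mul (h.tendsto_apply ht (T / 4))).const_mul κ
  refine ge_of_tendsto ((h.tendsto_setIntegral_mul_self hR).sub
    ((h.tendsto_setIntegral hR ht).const_mul 4)) ?_
  filter_upwards [hzero, ht.abs.eventually_lt_const (by rwa [abs_of_pos hTpos]),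
    h0.eventually_const_lt one_pos, (h0.sub (h1.const_mul 2)).eventually_lt_const
    (show (1 : ℝ) - 2 * 1 < 0 by norm_num)] with i hti htR hpos hlt
  rw [← h.kernel_zero_zero i]
  exact (h.orthonormal i).CDKernel_zero_zero_le hti htR (pos_of_mul_pos_right hpos hκ.le)
    (le_of_mul_le_mul_left (by linarith) hκ)

theorem le_pi [l.NeBot] (h : IsSincKernelLimit ν q N l κ) (hκ : 0 < κ) : κ ≤ Real.pi := by
  have hT : κ * (2 * Real.pi / κ) = 2 * Real.pi := mul_div_cancel₀ _ hκ.ne'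
  have hlim := (tendsto_intervalIntegral_sinc_mul_sq hκ).sub
    ((tendsto_intervalIntegral_sinc_mul_sinc_sub hκ hT).const_mul 4)
  rw [mul_zero, sub_zero] at hlim
  exact (one_le_div hκ).1 (ge_of_tendsto hlim
    ((eventually_gt_atTop _).mono fun _ ↦ h.one_le hκ hT))

theorem eq_pi [l.NeBot] (h : IsSincKernelLimit ν q N l κ) (hκ : 0 ≤ κ) : κ = Real.pi := by
  have hpos : 0 < κ := hκ.lt_of_ne' h.ne_zero
  exact (h.le_pi hpos).antisymm (h.pi_le hpos)

end IsSincKernelLimit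

theorem IsNormalizedKernelFamily.tendstoContinuously_sinc (h : IsNormalizedKernelFamily ν q N l)
    (hν : TendstoLebesgueLocally ν l) :
    TendstoContinuously (fun i (x : ℝ × ℝ) ↦ CDKernel (q i) (N i) x.1 x.2)
      (fun x ↦ Real.sinc (Real.pi * (x.2 - x.1))) l := by
  refine tendstoContinuously_of_forall_ultrafilter fun U hU ↦ ?_
  have hq := h.mono hU
  obtain ⟨κ, hκ, hlim⟩ := hq.exists_tendstoContinuously_sinc
  have hsinc : IsSincKernelLimit ν q N U κ :=
    ⟨hq.orthonormal, hq.kernel_zero_zero, hν.mono hU, hlim⟩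
  rwa [hsinc.eq_pi hκ] at hlim

end Scale

section Universality

variable {μ : Measure ℝ} {p : ℕ → ℝ[X]} {x₀ b c : ℝ} {τ : ℕ → ℝ}

theorem subgaussianGrowth_atTop_iff {F : ℕ → ℂ → ℝ} :
    SubgaussianGrowth F atTop ↔ ∀ ε : ℝ, 0 < ε → ∃ C : ℝ, 0 < C ∧ ∀ R : ℝ, ∃ N : ℕ,
      ∀ n : ℕ, N < n → ∀ z : ℂ, ‖z‖ < R → F n z ≤ C * Real.exp (ε * ‖z‖ ^ 2) := by
  refine forall₂_congr fun ε _ ↦ ⟨fun ⟨C, hC⟩ ↦ ⟨max C 1, by positivity, fun R ↦ ?_⟩,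
    fun ⟨C, _, hC⟩ ↦ ⟨C, fun R ↦ ?_⟩⟩
  · obtain ⟨N, hN⟩ := eventually_atTop.1 (hC R)
    refine ⟨N, fun n hn z hz ↦ (hN n hn.le z hz).trans ?_⟩
    gcongr
    exact le_max_left C 1
  · obtain ⟨N, hN⟩ := hC R
    exact (eventually_gt_atTop N).mono hN

theorem IsOrthonormalPolynomials.isFiniteMeasure (h : IsOrthonormalPolynomials μ p) :
    IsFiniteMeasure μ := by
  have hone : MemLp (fun _ ↦ (1 : ℝ)) 2 μ := by simpa using h.memLp_eval 1
  exact ⟨((memLp_const_iff two_ne_zero ENNReal.ofNat_ne_top).1 hone).resolve_left one_ne_zero⟩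

theorem IsOrthonormalPolynomials.CDKernel_self_pos (h : IsOrthonormalPolynomials μ p) (n : ℕ)
    (x : ℝ) : 0 < CDKernel p n x x :=
  cdDiag_ofReal (p := p) x ▸ h.cdDiag_pos n x

theorem IsOrthonormalPolynomials.exists_eventually_mul_le_CDKernel
    (h : IsOrthonormalPolynomials μ p)
    (hliminf : 0 < liminf (fun n : ℕ ↦ (1 / (n + 1) : ℝ) * CDKernel p n x₀ x₀) atTop) :
    ∃ c : ℝ, 0 < c ∧ ∀ᶠ n : ℕ in atTop, c * (n + 1) ≤ CDKernel p n x₀ x₀ := by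
  obtain ⟨c, hc, hlt⟩ := exists_between hliminf
  have hbdd : IsBoundedUnder (· ≥ ·) atTop
      fun n : ℕ ↦ (1 / (n + 1) : ℝ) * CDKernel p n x₀ x₀ :=
    isBoundedUnder_of ⟨0, fun n ↦ mul_nonneg (by positivity) (h.CDKernel_self_pos n x₀).le⟩
  refine ⟨c, hc, (eventually_lt_of_lt_liminf hlt hbdd).mono fun n hn ↦ ?_⟩
  rw [one_div, inv_mul_eq_div, lt_div_iff₀ (by positivity)] at hn
  exact hn.le

theorem tendsto_CDKernel_div_of_wiggle
    (hwiggle : ∀ A : ℝ, 0 < A → TendstoUniformlyOn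
      (fun (n : ℕ) (a : ℝ) ↦ CDKernel p n (x₀ + a / n) (x₀ + a / n) / CDKernel p n x₀ x₀)
      (fun _ ↦ 1) atTop (Icc (-A) A))
    (hτ : ∀ᶠ n : ℕ in atTop, (n : ℝ) / τ n ∈ Icc 0 b) (x : ℝ) :
    Tendsto (fun n ↦ CDKernel p n (x₀ + x / τ n) (x₀ + x / τ n) / CDKernel p n x₀ x₀) atTop
      (𝓝 1) := by
  refine Metric.tendsto_nhds.2 fun ε hε ↦ ?_
  filter_upwards [Metric.tendstoUniformlyOn_iff.1
    (hwiggle (|x| * |b| + 1) (by positivity)) ε hε, hτ, eventually_ne_atTop 0] with n hn hτn hn0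
  have hmem : x * (n / τ n) ∈ Icc (-(|x| * |b| + 1)) (|x| * |b| + 1) := by
    rw [mem_Icc, ← abs_le, abs_mul, abs_of_nonneg hτn.1]
    linarith [mul_le_mul_of_nonneg_left (hτn.2.trans (le_abs_self b)) (abs_nonneg x)]
  have hx : x * (n / τ n) / n = x / τ n := by
    have : (n : ℝ) ≠ 0 := by exact_mod_cast hn0
    field_simp
  simpa only [hx, dist_comm] using hn _ hmem

theorem SubgaussianGrowth.cdDiag_div
    (h : SubgaussianGrowth (fun (n : ℕ) z ↦ (1 / (n + 1) : ℝ) * cdDiag p n (x₀ + z / n)) atTop)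
    (hc : 0 < c) (hK : ∀ᶠ n : ℕ in atTop, c * (n + 1) ≤ CDKernel p n x₀ x₀)
    (hτ : ∀ᶠ n : ℕ in atTop, (n : ℝ) / τ n ∈ Icc 0 b) :
    SubgaussianGrowth (fun n z ↦ cdDiag p n (x₀ + z / τ n) / CDKernel p n x₀ x₀) atTop := by
  intro ε hε
  obtain ⟨C, hC⟩ := h (ε / (b ^ 2 + 1)) (by positivity)
  refine ⟨|C| / c, fun R ↦ ?_⟩
  filter_upwards [hC (|R| * |b| + 1), hK, hτ, eventually_ne_atTop 0] with n hn hKn hτn hn0 z hz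
  have hz' : z * (n / τ n : ℝ) / n = z / τ n := by
    have : (n : ℂ) ≠ 0 := by exact_mod_cast hn0
    push_cast
    field_simp
  have hnorm : ‖z * (n / τ n : ℝ)‖ ≤ ‖z‖ * b := by
    rw [norm_mul, Complex.norm_real, Real.norm_of_nonneg hτn.1]
    exact mul_le_mul_of_nonneg_left hτn.2 (norm_nonneg z)
  have hlt : ‖z * (n / τ n : ℝ)‖ < |R| * |b| + 1 := by
    nlinarith [abs_nonneg b, le_abs_self b, le_abs_self R, norm_nonneg z]
  have hexp : ε / (b ^ 2 + 1) * ‖z * (n / τ n : ℝ)‖ ^ 2 ≤ ε * ‖z‖ ^ 2 := by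
    calc _ ≤ ε / (b ^ 2 + 1) * (‖z‖ * b) ^ 2 := by gcongr
      _ = b ^ 2 / (b ^ 2 + 1) * (ε * ‖z‖ ^ 2) := by ring
      _ ≤ ε * ‖z‖ ^ 2 := mul_le_of_le_one_left (by positivity)
        ((div_le_one (by positivity)).2 (by linarith))
  have hbound := hn _ hlt
  rw [hz', one_div, inv_mul_eq_div, div_le_iff₀ (by positivity)] at hbound
  have hKpos : 0 < CDKernel p n x₀ x₀ := lt_of_lt_of_le (by positivity) hKn
  rw [div_le_iff₀ hKpos]
  calc cdDiag p n (x₀ + z / τ n)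
      ≤ C * Real.exp (ε / (b ^ 2 + 1) * ‖z * (n / τ n : ℝ)‖ ^ 2) * (n + 1) := hbound
    _ ≤ |C| * Real.exp (ε * ‖z‖ ^ 2) * (n + 1) := by
        gcongr
        exact le_abs_self C
    _ = |C| / c * Real.exp (ε * ‖z‖ ^ 2) * (c * (n + 1)) := by field_simp
    _ ≤ |C| / c * Real.exp (ε * ‖z‖ ^ 2) * CDKernel p n x₀ x₀ := by gcongr

theorem IsOrthonormalPolynomials.isNormalizedKernelFamily_rescaledPolynomial
    (h : IsOrthonormalPolynomials μ p) (hτ_pos : ∀ n, 0 < τ n)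
    (hdiag : ∀ x, Tendsto (fun n ↦ CDKernel p n (x₀ + x / τ n) (x₀ + x / τ n) /
      CDKernel p n x₀ x₀) atTop (𝓝 1))
    (hgrowth : SubgaussianGrowth
      (fun n z ↦ cdDiag p n (x₀ + z / τ n) / CDKernel p n x₀ x₀) atTop) :
    IsNormalizedKernelFamily (fun n ↦ blowUp μ x₀ (CDKernel p n x₀ x₀) (τ n))
      (fun n ↦ rescaledPolynomial p x₀ (CDKernel p n x₀ x₀) (τ n)) id atTop where
  orthonormal n := h.rescale (h.CDKernel_self_pos n x₀) (hτ_pos n).ne'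
  kernel_zero_zero n := by
    rw [id, CDKernel_rescaledPolynomial (h.CDKernel_self_pos n x₀).le, zero_div, add_zero,
      div_self (h.CDKernel_self_pos n x₀).ne']
  tendsto_diag x := by
    simpa only [id, CDKernel_rescaledPolynomial (h.CDKernel_self_pos _ x₀).le] using hdiag x
  subgaussian ε hε := by
    simpa only [id, cdDiag_rescaledPolynomial (h.CDKernel_self_pos _ x₀).le] using hgrowth ε hε

theorem IsLebesguePoint.tendstoContinuously_CDKernel_div (hx₀ : IsLebesguePoint μ x₀)
    (h : IsOrthonormalPolynomials μ p)
    (hwiggle : ∀ A : ℝ, 0 < A → TendstoUniformlyOn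
      (fun (n : ℕ) (a : ℝ) ↦ CDKernel p n (x₀ + a / n) (x₀ + a / n) / CDKernel p n x₀ x₀)
      (fun _ ↦ 1) atTop (Icc (-A) A))
    (hliminf : 0 < liminf (fun n : ℕ ↦ (1 / (n + 1) : ℝ) * CDKernel p n x₀ x₀) atTop)
    (hgrowth : SubgaussianGrowth
      (fun (n : ℕ) z ↦ (1 / (n + 1) : ℝ) * cdDiag p n (x₀ + z / n)) atTop)
    (hτ : τ = fun n ↦ (μ.rnDeriv volume x₀).toReal * CDKernel p n x₀ x₀) :
    TendstoContinuously
      (fun n (x : ℝ × ℝ) ↦ CDKernel p n (x₀ + x.1 / τ n) (x₀ + x.2 / τ n) / CDKernel p n x₀ x₀)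
      (fun x ↦ Real.sinc (Real.pi * (x.2 - x.1))) atTop := by
  have := h.isFiniteMeasure
  set w := (μ.rnDeriv volume x₀).toReal
  have hw : 0 < w := hx₀.rnDeriv_pos
  have hKpos (n : ℕ) := h.CDKernel_self_pos n x₀
  obtain ⟨c, hc, hK⟩ := h.exists_eventually_mul_le_CDKernel hliminf
  have hτ_pos (n : ℕ) : 0 < τ n := hτ ▸ mul_pos hw (hKpos n)
  have hτ_ge : ∀ᶠ n : ℕ in atTop, w * c * n ≤ τ n := hK.mono fun n hn ↦ by
    rw [hτ]
    nlinarith [mul_pos hw hc, mul_le_mul_of_nonneg_left hn hw.le]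
  have hτ_atTop : Tendsto τ atTop atTop :=
    tendsto_atTop_mono' _ hτ_ge (tendsto_natCast_atTop_atTop.const_mul_atTop (mul_pos hw hc))
  have hratio : ∀ᶠ n : ℕ in atTop, (n : ℝ) / τ n ∈ Icc 0 (w * c)⁻¹ := hτ_ge.mono fun n hn ↦
    ⟨div_nonneg n.cast_nonneg (hτ_pos n).le, by
      rwa [div_le_iff₀ (hτ_pos n), inv_mul_eq_div, le_div_iff₀' (mul_pos hw hc)]⟩
  have hlim := (h.isNormalizedKernelFamily_rescaledPolynomial hτ_pos
    (tendsto_CDKernel_div_of_wiggle hwiggle hratio)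
    (hgrowth.cdDiag_div hc hK hratio)).tendstoContinuously_sinc
    (hx₀.tendstoLebesgueLocally_blowUp hτ_atTop (.of_forall fun n ↦ congrFun hτ n))
  simpa only [id, CDKernel_rescaledPolynomial (hKpos _).le] using hlim

theorem sinc_pi_mul_sub (x y : ℝ) :
    Real.sinc (Real.pi * (y - x)) =
      if x = y then 1 else Real.sin (Real.pi * (y - x)) / (Real.pi * (y - x)) := by
  simp only [Real.sinc_apply, mul_eq_zero, Real.pi_ne_zero, false_or, sub_eq_zero, eq_comm]

end Universality

theorem stmt_0_general {μ : Measure ℝ} {p : ℕ → ℝ[X]} (hp : IsOrthonormalPolynomials μ p) {x₀ : ℝ}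
    (hx₀ : IsLebesguePoint μ x₀)
    (hwiggle : ∀ A : ℝ, 0 < A → TendstoUniformlyOn
      (fun (n : ℕ) (a : ℝ) ↦ CDKernel p n (x₀ + a / n) (x₀ + a / n) / CDKernel p n x₀ x₀)
      (fun _ ↦ 1) atTop (Icc (-A) A))
    (hliminf : 0 < liminf (fun n : ℕ ↦ (1 / (n + 1) : ℝ) * CDKernel p n x₀ x₀) atTop)
    (hgrowth : SubgaussianGrowth
      (fun (n : ℕ) z ↦ (1 / (n + 1) : ℝ) * cdDiag p n (x₀ + z / n)) atTop)
    {ρ : ℕ → ℝ}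
    (hρ : ρ = fun n : ℕ ↦ (1 / n : ℝ) * (μ.rnDeriv volume x₀).toReal * CDKernel p n x₀ x₀)
    (A : ℝ) :
    TendstoUniformlyOn
      (fun (n : ℕ) (ab : ℝ × ℝ) ↦
        CDKernel p n (x₀ + ab.1 / (n * ρ n)) (x₀ + ab.2 / (n * ρ n)) / CDKernel p n x₀ x₀)
      (fun ab ↦ if ab.1 = ab.2 then 1
        else Real.sin (Real.pi * (ab.2 - ab.1)) / (Real.pi * (ab.2 - ab.1)))
      atTop (Icc (-A) A ×ˢ Icc (-A) A) := by
  have hlim := hx₀.tendstoContinuously_CDKernel_div hp hwiggle hliminf hgrowth rfl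
  have hunif : TendstoUniformlyOn _ _ atTop (Icc (-A) A ×ˢ Icc (-A) A) :=
    (tendstoLocallyUniformlyOn_iff_tendstoUniformlyOn_of_compact
      (isCompact_Icc.prod isCompact_Icc)).1
      (hlim.tendstoLocallyUniformly hlim.continuous).tendstoLocallyUniformlyOn
  simp only [sinc_pi_mul_sub] at hunif
  refine hunif.congr ((eventually_ne_atTop 0).mono fun n hn ab _ ↦ ?_)
  have hnρ : n * ρ n = (μ.rnDeriv volume x₀).toReal * CDKernel p n x₀ x₀ := by
    rw [hρ]
    field_simp
  simp only [hnρ]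

/-- **Theorem 1** of Avila–Last–Simon.  Let `μ` be a probability measure on `ℝ` with compact,
infinite support, `p_n` its orthonormal polynomials, `K_n` the CD kernel, `w` the a.c. weight
`dμ/dx`, and let `x₀` be a Lebesgue point of `μ`.  Assume (1) the Lubinsky wiggle condition
`K_n(x₀ + a/n, x₀ + a/n)/K_n(x₀,x₀) → 1` uniformly for `a ∈ [-A, A]`, for every `A`;
(2) `liminf (1/(n+1)) K_n(x₀,x₀) > 0`; (3) for every `ε > 0` there is `C_ε > 0` so that for
every `R` there is `N` with `(1/(n+1)) K_n(x₀ + z/n, x₀ + z/n) ≤ C_ε exp(ε|z|²)` for `n > N`,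
`|z| < R`.  Then, with `ρ_n = (1/n) w(x₀) K_n(x₀,x₀)`, weak bulk universality holds at `x₀`:
`K_n(x₀ + a/(nρ_n), x₀ + b/(nρ_n))/K_n(x₀,x₀) → sin(π(b-a))/(π(b-a))` uniformly for `a, b` in
compact subsets of `ℝ`. -/
theorem stmt_0
    (μ : Measure ℝ) [IsProbabilityMeasure μ]
    (hsupp_cpt : IsCompact (measSupport μ)) (hsupp_inf : (measSupport μ).Infinite)
    (p : ℕ → Polynomial ℝ)
    (hdeg : ∀ n : ℕ, (p n).natDegree = n)
    (hlead : ∀ n : ℕ, 0 < (p n).leadingCoeff)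
    (horth : ∀ n m : ℕ, (∫ x, (p n).eval x * (p m).eval x ∂μ) = if n = m then 1 else 0)
    (w : ℝ → ℝ) (hw : w = fun x => (μ.rnDeriv volume x).toReal)
    (x₀ : ℝ) (hwx₀ : 0 < w x₀)
    (hLeb1 : Tendsto (fun δ : ℝ => (2 * δ)⁻¹ * ∫ x in Ioo (x₀ - δ) (x₀ + δ), |w x - w x₀|)
      (nhdsWithin 0 (Ioi 0)) (nhds 0))
    (hLeb2 : Tendsto
      (fun δ : ℝ => (2 * δ)⁻¹ * ((μ.singularPart volume) (Ioo (x₀ - δ) (x₀ + δ))).toReal)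
      (nhdsWithin 0 (Ioi 0)) (nhds 0))
    (hwiggle : ∀ A : ℝ, 0 < A →
      TendstoUniformlyOn
        (fun (n : ℕ) (a : ℝ) => CDKernel p n (x₀ + a / n) (x₀ + a / n) / CDKernel p n x₀ x₀)
        (fun _ => 1) atTop (Icc (-A) A))
    (hliminf : 0 < Filter.liminf (fun n : ℕ => (1 / (n + 1) : ℝ) * CDKernel p n x₀ x₀) atTop)
    (hcond3 : ∀ ε : ℝ, 0 < ε → ∃ Cε : ℝ, 0 < Cε ∧ ∀ R : ℝ, ∃ N : ℕ,
      ∀ n : ℕ, N < n → ∀ z : ℂ, ‖z‖ < R →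
        (1 / (n + 1) : ℝ) *
            ∑ j ∈ Finset.range (n + 1), ‖Polynomial.aeval ((x₀ : ℂ) + z / n) (p j)‖ ^ 2 ≤
          Cε * Real.exp (ε * ‖z‖ ^ 2))
    (ρ : ℕ → ℝ) (hρ : ρ = fun n : ℕ => (1 / n : ℝ) * w x₀ * CDKernel p n x₀ x₀) :
    ∀ A : ℝ, 0 < A →
      TendstoUniformlyOn
        (fun (n : ℕ) (ab : ℝ × ℝ) =>
          CDKernel p n (x₀ + ab.1 / (n * ρ n)) (x₀ + ab.2 / (n * ρ n)) / CDKernel p n x₀ x₀)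
        (fun ab => if ab.1 = ab.2 then 1
          else Real.sin (Real.pi * (ab.2 - ab.1)) / (Real.pi * (ab.2 - ab.1)))
        atTop (Icc (-A) A ×ˢ Icc (-A) A) := by
  subst hw
  exact fun A _ ↦ stmt_0_general ⟨hdeg, horth⟩ ⟨hwx₀, hLeb1, hLeb2⟩ hwiggle hliminf
    (subgaussianGrowth_atTop_iff.2 hcond3) hρ A
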